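/- Let 𝕊² be the unit sphere in ℝ³ and let ℱ be a dimension-one foliation on the 3-manifold 𝕊² × 𝕃₊. Then there is α ∈ 𝕃₊ such that for every z ∈ 𝕊² the set {z} × (α,→) is contained in a single leaf of ℱ (the restriction of ℱ to 𝕊² × (α,→) is the trivial product foliation by long rays). -/

import Mathlib

noncomputable section

open Set Topology Filter

universe u

/-! ### The long ray and the long line -/

/-- The first uncountable ordinal `ω₁`, viewed as the linearly ordered set of all
countable ordinals. -/
def Omega1 : Type 1 := {o : Ordinal.{0} // o < (Cardinal.aleph 1).ord}

instance : LinearOrder Omega1 :=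
  inferInstanceAs (LinearOrder {o : Ordinal.{0} // o < (Cardinal.aleph 1).ord})

/-- `ω₁` carries the order topology. -/
instance : TopologicalSpace Omega1 := Preorder.topology Omega1

instance : OrderTopology Omega1 := ⟨rfl⟩

/-- The underlying countable ordinal of an element of `ω₁`. -/
def Omega1.toOrdinal : Omega1 → Ordinal.{0} := Subtype.val

/-- The closed long ray `𝕃≥0`: the set `ω₁ × [0,1)` with the lexicographic order and the
order topology. -/
def ClosedLongRay : Type 1 := Omega1 ×ₗ (Set.Ico (0:ℝ) 1)

instance : LinearOrder ClosedLongRay :=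
  inferInstanceAs (LinearOrder (Omega1 ×ₗ (Set.Ico (0:ℝ) 1)))

instance : TopologicalSpace ClosedLongRay := Preorder.topology ClosedLongRay

instance : OrderTopology ClosedLongRay := ⟨rfl⟩

/-- The long ray `𝕃₊`: the closed long ray with its least element removed, with the
subspace topology (an element is non-minimal iff something is below it). -/
def LongRay : Type 1 := {x : ClosedLongRay // ∃ y, y < x}

instance : LinearOrder LongRay :=
  inferInstanceAs (LinearOrder {x : ClosedLongRay // ∃ y, y < x})

instance : TopologicalSpace LongRay :=
  inferInstanceAs (TopologicalSpace {x : ClosedLongRay // ∃ y, y < x})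

/-- The inclusion of the long ray into the closed long ray. -/
def LongRay.toCLR : LongRay → ClosedLongRay := Subtype.val

/-- The long line `𝕃`: an order-reversed copy of `𝕃₊` placed below the closed long ray
`𝕃≥0`, with the order topology. -/
def LongLine : Type 1 := (OrderDual LongRay) ⊕ₗ ClosedLongRay

instance : LinearOrder LongLine :=
  inferInstanceAs (LinearOrder ((OrderDual LongRay) ⊕ₗ ClosedLongRay))

instance : TopologicalSpace LongLine := Preorder.topology LongLine

instance : OrderTopology LongLine := ⟨rfl⟩

/-- The identification of `𝕃₊` with the set of positive elements of `𝕃`. -/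
def LongRay.inL (a : LongRay) : LongLine := toLex (Sum.inr a.toCLR)

/-- The natural order-reversing involution `x ↦ -x` of the long line, exchanging the two
copies of `𝕃₊` and fixing the least element `0` of `𝕃≥0`. -/
noncomputable def LongLine.neg (x : LongLine) : LongLine :=
  match ofLex x with
  | Sum.inl a => toLex (Sum.inr (OrderDual.ofDual a).toCLR)
  | Sum.inr b =>
      @dite _ (∃ y, y < b) (Classical.dec _)
        (fun h => toLex (Sum.inl (OrderDual.toDual (⟨b, h⟩ : LongRay))))
        (fun _ => x)

/-- A subset of the long ray is a *club* if it is closed (in the topology of `𝕃₊`) and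
unbounded (i.e. cofinal). -/
def ClubInLongRay (C : Set LongRay) : Prop :=
  IsClosed C ∧ ∀ β : LongRay, ∃ α ∈ C, β ≤ α

/-- A topological space `X` is *squat* if every continuous map `𝕃₊ → X` is eventually
constant. -/
def Squat (X : Type*) [TopologicalSpace X] : Prop :=
  ∀ f : LongRay → X, Continuous f → ∃ (β : LongRay) (x : X), ∀ α, β ≤ α → f α = x

/-! ### Manifolds and foliations -/

/-- A (topological) `n`-manifold: a nonempty Hausdorff space in which every point has an
open neighbourhood homeomorphic to `ℝⁿ`. -/
def IsTopManifold (M : Type u) [TopologicalSpace M] (n : ℕ) : Prop :=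
  Nonempty M ∧ T2Space M ∧
    ∀ x : M, ∃ U : Set M, x ∈ U ∧ IsOpen U ∧ Nonempty (U ≃ₜ (Fin n → ℝ))

/-- A foliation of dimension `p` and codimension `q` on a space `M`: a family of charts
`φᵢ : Uᵢ ≃ₜ ℝᵖ × ℝ^q` on open sets covering `M` such that all coordinate transformations
have the form `(x, y) ↦ (g (x, y), h y)`, i.e. the last `q` coordinates of the image
depend only on the last `q` coordinates of the argument. -/
structure Foliation (M : Type u) [TopologicalSpace M] (p q : ℕ) where
  /-- index type of the atlas -/
  ι : Type u
  /-- chart domains -/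
  U : ι → Set M
  /-- the charts -/
  chart : (i : ι) → ((U i) ≃ₜ ((Fin p → ℝ) × (Fin q → ℝ)))
  isOpen : ∀ i, IsOpen (U i)
  covers : ∀ x : M, ∃ i, x ∈ U i
  compat : ∀ i j (x y : M) (hxi : x ∈ U i) (hxj : x ∈ U j) (hyi : y ∈ U i) (hyj : y ∈ U j),
    (chart i ⟨x, hxi⟩).2 = (chart i ⟨y, hyi⟩).2 → (chart j ⟨x, hxj⟩).2 = (chart j ⟨y, hyj⟩).2

namespace Foliation

variable {M : Type u} [TopologicalSpace M] {p q : ℕ}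

/-- The set `φᵢ⁻¹ (ℝᵖ × {y})` in the chart domain `Uᵢ`. -/
def plaqueFibre (F : Foliation M p q) (i : F.ι) (y : Fin q → ℝ) : Set M :=
  {w : M | ∃ hw : w ∈ F.U i, (F.chart i ⟨w, hw⟩).2 = y}

/-- A *plaque* of the foliation: a connected component of a set of the form
`φᵢ⁻¹ (ℝᵖ × {y})`. -/
def IsPlaque (F : Foliation M p q) (P : Set M) : Prop :=
  ∃ (i : F.ι) (y : Fin q → ℝ) (z : M), z ∈ F.plaqueFibre i y ∧
    P = connectedComponentIn (F.plaqueFibre i y) z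

/-- Two points lie in a common plaque. -/
def samePlaque (F : Foliation M p q) (x y : M) : Prop :=
  ∃ P, F.IsPlaque P ∧ x ∈ P ∧ y ∈ P

/-- The leaf relation: the smallest equivalence relation relating any two points that lie
in a common plaque. -/
def leafRel (F : Foliation M p q) : M → M → Prop := Relation.EqvGen F.samePlaque

/-- The *leaves* of the foliation: equivalence classes of the leaf relation. -/
def IsLeaf (F : Foliation M p q) (L : Set M) : Prop :=
  ∃ x : M, L = {y | F.leafRel x y}

/-- The *leaf topology* on a leaf (or any subset) `L`: the topology generated by the
plaques contained in `L`. -/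
def leafTopology (F : Foliation M p q) (L : Set M) : TopologicalSpace L :=
  TopologicalSpace.generateFrom
    {s : Set L | ∃ P, F.IsPlaque P ∧ P ⊆ L ∧ s = Subtype.val ⁻¹' P}

/-- A leaf is *long* if it is not metrisable in its leaf topology. -/
def IsLongLeaf (F : Foliation M p q) (L : Set M) : Prop :=
  F.IsLeaf L ∧ ¬ @TopologicalSpace.MetrizableSpace L (F.leafTopology L)

/-- A subset of `M` is *saturated* by the foliation if it is a union of leaves. -/
def Saturated (F : Foliation M p q) (S : Set M) : Prop :=
  ∀ x ∈ S, ∀ y, F.leafRel x y → y ∈ S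

end Foliation

/-! ### Order facts on the long ray -/

theorem Omega1.wf : WellFounded (fun a b : Omega1 => a < b) :=
  InvImage.wf (Subtype.val : Omega1 → Ordinal.{0}) Ordinal.lt_wf

def Omega1.mk (o : Ordinal.{0}) (h : o < Ordinal.omega 1) : Omega1 :=
  ⟨o, by rw [Cardinal.ord_aleph]; exact h⟩

theorem Omega1.toOrdinal_lt (a : Omega1) : a.toOrdinal < Ordinal.omega 1 := by
  have h : a.toOrdinal < (Cardinal.aleph 1).ord := a.2
  rwa [Cardinal.ord_aleph] at h

theorem Omega1.countable_lt (s : Set Omega1) (hs : s.Countable) : ∃ b, ∀ a ∈ s, a < b := by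
  have : Countable s := hs.to_subtype
  have h1 : ∀ a : s, Order.succ a.1.toOrdinal < Ordinal.omega 1 := fun a =>
    (Cardinal.isSuccLimit_omega 1).succ_lt a.1.toOrdinal_lt
  have h3 := Ordinal.iSup_lt_omega_one h1
  refine ⟨Omega1.mk _ h3, ?_⟩
  intro a ha
  have h4 : Order.succ a.toOrdinal ≤ ⨆ a : s, Order.succ a.1.toOrdinal :=
    Ordinal.le_iSup (fun a : s => Order.succ a.1.toOrdinal) ⟨a, ha⟩
  have h5 := lt_of_lt_of_le (Order.lt_succ a.toOrdinal) h4
  exact h5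

/-- build a point of the closed long ray -/
def clrMk (o : Omega1) (r : ℝ) (h : r ∈ Set.Ico (0:ℝ) 1) : ClosedLongRay := toLex (o, ⟨r, h⟩)
def clrO (x : ClosedLongRay) : Omega1 := (ofLex x).1
def clrR (x : ClosedLongRay) : ℝ := (ofLex x).2.1

theorem clrR_mem (x : ClosedLongRay) : clrR x ∈ Set.Ico (0:ℝ) 1 := (ofLex x).2.2

theorem clr_lt (x y : ClosedLongRay) :
    x < y ↔ clrO x < clrO y ∨ clrO x = clrO y ∧ clrR x < clrR y := by
  exact Prod.Lex.lt_iff (x := x) (y := y)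

theorem clr_le (x y : ClosedLongRay) :
    x ≤ y ↔ clrO x < clrO y ∨ clrO x = clrO y ∧ clrR x ≤ clrR y := by
  exact Prod.Lex.le_iff (x := x) (y := y)

@[simp] theorem clrO_mk (o r h) : clrO (clrMk o r h) = o := rfl
@[simp] theorem clrR_mk (o r h) : clrR (clrMk o r h) = r := rfl

theorem clr_exists_glb (s : Set ClosedLongRay) (hs : s.Nonempty) : ∃ a, IsGLB s a := by
  obtain ⟨o, ⟨x, hx, rfl⟩, ho⟩ := Omega1.wf.has_min (clrO '' s) (hs.image _)
  have ho' : ∀ y ∈ s, clrO x ≤ clrO y := fun y hy => not_lt.1 (ho _ (mem_image_of_mem _ hy))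
  set R : Set ℝ := clrR '' {y ∈ s | clrO y = clrO x} with hR
  have hne : R.Nonempty := ⟨clrR x, x, ⟨hx, rfl⟩, rfl⟩
  have hbd : BddBelow R := ⟨0, by rintro _ ⟨y, _, rfl⟩; exact (clrR_mem y).1⟩
  have h0 : sInf R ∈ Set.Ico (0:ℝ) 1 := by
    refine ⟨le_csInf hne (by rintro _ ⟨y, _, rfl⟩; exact (clrR_mem y).1), ?_⟩
    exact lt_of_le_of_lt (csInf_le hbd ⟨x, ⟨hx, rfl⟩, rfl⟩) (clrR_mem x).2
  refine ⟨clrMk (clrO x) (sInf R) h0, ?_, ?_⟩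
  · intro y hy
    rw [clr_le]
    rcases (ho' y hy).lt_or_eq with h | h
    · exact Or.inl h
    · exact Or.inr ⟨h, csInf_le hbd ⟨y, ⟨hy, h.symm⟩, rfl⟩⟩
  · intro w hw
    rw [clr_le]
    rcases (clr_le _ _).1 (hw hx) with h | h
    · exact Or.inl h
    · refine Or.inr ⟨h.1, le_csInf hne ?_⟩
      rintro _ ⟨y, ⟨hy, hyx⟩, rfl⟩
      rcases (clr_le _ _).1 (hw hy) with h' | h'
      · rw [hyx, ← h.1] at h'; exact absurd h' (lt_irrefl _)
      · exact h'.2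

theorem lr_lt (x y : LongRay) : x < y ↔ x.1 < y.1 := Iff.rfl
theorem lr_le (x y : LongRay) : x ≤ y ↔ x.1 ≤ y.1 := Iff.rfl

theorem lr_exists_glb (s : Set LongRay) (hs : s.Nonempty) (hb : BddBelow s) :
    ∃ a, IsGLB s a := by
  obtain ⟨a, ha⟩ := clr_exists_glb ((fun x : LongRay => x.1) '' s) (hs.image _)
  obtain ⟨b, hb⟩ := hb
  have hba : b.1 ≤ a := ha.2 (by rintro _ ⟨y, hy, rfl⟩; exact hb hy)
  obtain ⟨c, hc⟩ := b.2
  refine ⟨⟨a, c, lt_of_lt_of_le hc hba⟩, ?_, ?_⟩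
  · intro y hy; exact ha.1 ⟨y, hy, rfl⟩
  · intro w hw
    exact ha.2 (by rintro _ ⟨y, hy, rfl⟩; exact hw hy)

instance clr_dense : DenselyOrdered ClosedLongRay := ⟨by
  intro a b hab
  rcases (clr_lt _ _).1 hab with h | h
  · have := clrR_mem a
    refine ⟨clrMk (clrO a) ((clrR a + 1) / 2) ⟨by linarith [this.1], by linarith [this.2]⟩, ?_, ?_⟩
    · rw [clr_lt]; right; refine ⟨rfl, ?_⟩; change _ < (clrR a + 1) / 2; linarith [this.2]
    · rw [clr_lt]; left; exact h
  · have h1 := clrR_mem a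
    have h2 := clrR_mem b
    refine ⟨clrMk (clrO a) ((clrR a + clrR b) / 2)
      ⟨by linarith [h1.1, h2.1], by linarith [h1.2, h2.2]⟩, ?_, ?_⟩
    · rw [clr_lt]; right; refine ⟨rfl, ?_⟩; change _ < (clrR a + clrR b) / 2; linarith [h.2]
    · rw [clr_lt]; right; refine ⟨h.1, ?_⟩; change (clrR a + clrR b) / 2 < _; linarith [h.2]⟩

instance lr_dense : DenselyOrdered LongRay := ⟨by
  intro a b hab
  obtain ⟨c, h1, h2⟩ := exists_between ((lr_lt a b).1 hab)
  exact ⟨⟨c, a.1, h1⟩, h1, h2⟩⟩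

instance lr_nomin : NoMinOrder LongRay := ⟨by
  intro a
  obtain ⟨c, hc⟩ := a.2
  obtain ⟨d, h1, h2⟩ := exists_between hc
  exact ⟨⟨d, c, h1⟩, h2⟩⟩

theorem lr_countable_lt (s : Set LongRay) (hs : s.Countable) : ∃ b, ∀ a ∈ s, a < b := by
  obtain ⟨o, ho⟩ := Omega1.countable_lt ((fun x : LongRay => clrO x.1) '' s) (hs.image _)
  obtain ⟨o', ho'⟩ := Omega1.countable_lt {o} (countable_singleton o)
  have h0 : (0:ℝ) ∈ Set.Ico (0:ℝ) 1 := by simp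
  have : clrMk o 0 h0 < clrMk o' 0 h0 := by
    rw [clr_lt]; left; exact ho' o rfl
  refine ⟨⟨clrMk o' 0 h0, _, this⟩, fun a ha => ?_⟩
  refine (clr_lt _ _).2 (Or.inl ?_)
  exact (ho _ ⟨a, ha, rfl⟩).trans (ho' o rfl)

instance lr_nomax : NoMaxOrder LongRay := ⟨by
  intro a
  obtain ⟨b, hb⟩ := lr_countable_lt {a} (countable_singleton a)
  exact ⟨b, hb a rfl⟩⟩

instance lr_nonempty : Nonempty LongRay :=
  ⟨(lr_countable_lt ∅ countable_empty).choose⟩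

instance lr_orderTopology : OrderTopology LongRay :=
  have : Set.OrdConnected {x : ClosedLongRay | ∃ y, y < x} :=
    ⟨by rintro a ⟨c, hc⟩ b _ x hx; exact ⟨c, lt_of_lt_of_le hc hx.1⟩⟩
  inferInstanceAs (OrderTopology {x : ClosedLongRay | ∃ y, y < x})

theorem lr_exists_lub (s : Set LongRay) (hs : s.Nonempty) (hb : BddAbove s) :
    ∃ a, IsLUB s a := by
  obtain ⟨x, hx⟩ := hs
  obtain ⟨a, ha⟩ := lr_exists_glb (upperBounds s) hb ⟨x, fun y hy => hy hx⟩
  exact ⟨a, fun y hy => ha.2 (fun b hb => hb hy), ha.1⟩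

/-- complete order structure -/
@[reducible] def lrCCLO : ConditionallyCompleteLinearOrder LongRay :=
  { (inferInstance : LinearOrder LongRay), (inferInstance : Lattice LongRay) with
    sSup := fun s => @dite _ (s.Nonempty ∧ BddAbove s) (Classical.dec _)
      (fun h => (lr_exists_lub s h.1 h.2).choose) (fun _ => Classical.arbitrary _)
    sInf := fun s => @dite _ (s.Nonempty ∧ BddBelow s) (Classical.dec _)
      (fun h => (lr_exists_glb s h.1 h.2).choose) (fun _ => Classical.arbitrary _)
    isLUB_csSup := fun s h1 h2 => by
      rw [dif_pos ⟨h1, h2⟩]; exact (lr_exists_lub s h1 h2).choose_spec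
    isGLB_csInf := fun s h1 h2 => by
      rw [dif_pos ⟨h1, h2⟩]; exact (lr_exists_glb s h1 h2).choose_spec
    csSup_of_not_bddAbove := fun s h => by
      rw [dif_neg (fun h' => h h'.2), dif_neg (fun h' => Set.not_nonempty_empty h'.1)]
    csInf_of_not_bddBelow := fun s h => by
      rw [dif_neg (fun h' => h h'.2), dif_neg (fun h' => Set.not_nonempty_empty h'.1)] }

/-! ### Chart coordinates -/

namespace Foliation

variable {M : Type u} [TopologicalSpace M] (F : Foliation M 1 2)

/-- leaf coordinate -/
def T (i : F.ι) (x : M) : ℝ :=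
  @dite _ (x ∈ F.U i) (Classical.dec _) (fun h => (F.chart i ⟨x, h⟩).1 0) (fun _ => 0)

/-- transverse coordinate -/
def Y (i : F.ι) (x : M) : Fin 2 → ℝ :=
  @dite _ (x ∈ F.U i) (Classical.dec _) (fun h => (F.chart i ⟨x, h⟩).2) (fun _ => 0)

/-- inverse chart -/
def psi (i : F.ι) (t : ℝ) (y : Fin 2 → ℝ) : M := ((F.chart i).symm (fun _ => t, y)).1

theorem psi_mem (i : F.ι) (t : ℝ) (y : Fin 2 → ℝ) : F.psi i t y ∈ F.U i :=
  ((F.chart i).symm (fun _ => t, y)).2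

theorem T_of_mem {i : F.ι} {x : M} (h : x ∈ F.U i) : F.T i x = (F.chart i ⟨x, h⟩).1 0 := dif_pos h
theorem Y_of_mem {i : F.ι} {x : M} (h : x ∈ F.U i) : F.Y i x = (F.chart i ⟨x, h⟩).2 := dif_pos h

@[simp] theorem T_psi (i : F.ι) (t : ℝ) (y : Fin 2 → ℝ) : F.T i (F.psi i t y) = t := by
  rw [T_of_mem F (F.psi_mem i t y)]
  simp [psi]

@[simp] theorem Y_psi (i : F.ι) (t : ℝ) (y : Fin 2 → ℝ) : F.Y i (F.psi i t y) = y := by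
  rw [Y_of_mem F (F.psi_mem i t y)]
  simp [psi]

theorem psi_T_Y {i : F.ι} {x : M} (h : x ∈ F.U i) : F.psi i (F.T i x) (F.Y i x) = x := by
  have h1 : ((fun _ => F.T i x, F.Y i x) : (Fin 1 → ℝ) × (Fin 2 → ℝ)) = F.chart i ⟨x, h⟩ := by
    rw [T_of_mem F h, Y_of_mem F h]
    refine Prod.ext ?_ rfl
    funext j
    rw [Subsingleton.elim j 0]
  rw [psi, h1]
  simp

theorem eq_of_TY {i : F.ι} {x x' : M} (h : x ∈ F.U i) (h' : x' ∈ F.U i)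
    (hT : F.T i x = F.T i x') (hY : F.Y i x = F.Y i x') : x = x' := by
  rw [← F.psi_T_Y h, ← F.psi_T_Y h', hT, hY]

theorem continuous_psi (i : F.ι) : Continuous fun p : ℝ × (Fin 2 → ℝ) => F.psi i p.1 p.2 := by
  unfold psi
  refine continuous_subtype_val.comp ((F.chart i).symm.continuous.comp ?_)
  exact Continuous.prodMk (continuous_pi fun _ => continuous_fst) continuous_snd

theorem continuous_psi_left (i : F.ι) (y) : Continuous fun t => F.psi i t y :=
  (F.continuous_psi i).comp (Continuous.prodMk continuous_id continuous_const)

theorem continuousOn_T (i : F.ι) : ContinuousOn (F.T i) (F.U i) := by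
  rw [continuousOn_iff_continuous_domRestrict]
  have : (F.U i).domRestrict (F.T i) = fun x => (F.chart i x).1 0 := by
    funext x; exact T_of_mem F x.2
  rw [this]
  exact (continuous_apply 0).comp (continuous_fst.comp (F.chart i).continuous)

theorem continuousOn_Y (i : F.ι) : ContinuousOn (F.Y i) (F.U i) := by
  rw [continuousOn_iff_continuous_domRestrict]
  have : (F.U i).domRestrict (F.Y i) = fun x => (F.chart i x).2 := by
    funext x; exact Y_of_mem F x.2
  rw [this]
  exact continuous_snd.comp (F.chart i).continuous

theorem continuousAt_T {i : F.ι} {x : M} (h : x ∈ F.U i) : ContinuousAt (F.T i) x :=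
  (F.continuousOn_T i).continuousAt ((F.isOpen i).mem_nhds h)
theorem continuousAt_Y {i : F.ι} {x : M} (h : x ∈ F.U i) : ContinuousAt (F.Y i) x :=
  (F.continuousOn_Y i).continuousAt ((F.isOpen i).mem_nhds h)

theorem Y_compat {i j : F.ι} {x y : M} (hxi : x ∈ F.U i) (hxj : x ∈ F.U j) (hyi : y ∈ F.U i)
    (hyj : y ∈ F.U j) (h : F.Y i x = F.Y i y) : F.Y j x = F.Y j y := by
  rw [Y_of_mem F hxi, Y_of_mem F hyi] at h
  rw [Y_of_mem F hxj, Y_of_mem F hyj]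
  exact F.compat i j x y hxi hxj hyi hyj h

theorem samePlaque_of_Y {i : F.ι} {x y : M} (hx : x ∈ F.U i) (hy : y ∈ F.U i)
    (h : F.Y i x = F.Y i y) : F.samePlaque x y := by
  have hfib : F.plaqueFibre i (F.Y i x) = range (fun t => F.psi i t (F.Y i x)) := by
    ext w
    constructor
    · rintro ⟨hw, hw'⟩
      rw [← Y_of_mem F hw] at hw'
      exact ⟨F.T i w, by change F.psi i (F.T i w) (F.Y i x) = w; rw [← hw', F.psi_T_Y hw]⟩
    · rintro ⟨t, rfl⟩
      refine ⟨F.psi_mem _ _ _, ?_⟩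
      rw [← Y_of_mem F (F.psi_mem _ _ _)]; simp
  have hconn : IsPreconnected (F.plaqueFibre i (F.Y i x)) := by
    rw [hfib]; exact isPreconnected_range (F.continuous_psi_left i _)
  have hxm : x ∈ F.plaqueFibre i (F.Y i x) := ⟨hx, (Y_of_mem F hx).symm⟩
  have hym : y ∈ F.plaqueFibre i (F.Y i x) := ⟨hy, by rw [h]; exact (Y_of_mem F hy).symm⟩
  refine ⟨_, ⟨i, F.Y i x, x, hxm, rfl⟩, mem_connectedComponentIn hxm, ?_⟩
  exact hconn.subset_connectedComponentIn hxm subset_rfl hym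

theorem secondCountable_U (i : F.ι) : SecondCountableTopology (F.U i) :=
  (F.chart i).secondCountableTopology

/-! ### Segments in leaves -/

/-- leaf segment between two points of a chart -/
def seg (k : F.ι) (x x' : M) : Set M :=
  {w | w ∈ F.U k ∧ F.Y k w = F.Y k x ∧ F.T k w ∈ uIcc (F.T k x) (F.T k x')}

def Conn (k : F.ι) (x x' : M) : Prop := x ∈ F.U k ∧ x' ∈ F.U k ∧ F.Y k x = F.Y k x'

theorem seg_eq_image (k : F.ι) (x x' : M) :
    F.seg k x x' = (fun t => F.psi k t (F.Y k x)) '' uIcc (F.T k x) (F.T k x') := by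
  ext w
  constructor
  · rintro ⟨h1, h2, h3⟩
    exact ⟨_, h3, by change F.psi k (F.T k w) (F.Y k x) = w; rw [← h2, F.psi_T_Y h1]⟩
  · rintro ⟨t, ht, rfl⟩
    exact ⟨F.psi_mem _ _ _, F.Y_psi _ _ _, by simpa using ht⟩

theorem isCompact_seg (k : F.ι) (x x' : M) : IsCompact (F.seg k x x') := by
  rw [seg_eq_image]
  exact isCompact_uIcc.image (F.continuous_psi_left k _)

theorem isPreconnected_seg (k : F.ι) (x x' : M) : IsPreconnected (F.seg k x x') := by
  rw [seg_eq_image]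
  exact isPreconnected_uIcc.image _ (F.continuous_psi_left k _).continuousOn

variable {F}

theorem left_mem_seg {k : F.ι} {x x' : M} (h : F.Conn k x x') : x ∈ F.seg k x x' :=
  ⟨h.1, rfl, left_mem_uIcc⟩
theorem right_mem_seg {k : F.ι} {x x' : M} (h : F.Conn k x x') : x' ∈ F.seg k x x' :=
  ⟨h.2.1, h.2.2.symm, right_mem_uIcc⟩

theorem conn_of_mem_seg {k : F.ι} {x x' w : M} (h : F.Conn k x x') (hw : w ∈ F.seg k x x') :
    F.Conn k x w := ⟨h.1, hw.1, hw.2.1.symm⟩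

theorem seg_subset {k : F.ι} {x x' w : M} (hw : w ∈ F.seg k x x') :
    F.seg k x w ⊆ F.seg k x x' := fun v hv =>
  ⟨hv.1, hv.2.1, uIcc_subset_uIcc left_mem_uIcc hw.2.2 hv.2.2⟩

/-- The segment does not depend on the chart. -/
theorem seg_transfer {k j : F.ι} {x x' : M} (h : F.Conn k x x') (hs : F.seg k x x' ⊆ F.U j) :
    F.Conn j x x' ∧ F.seg j x x' = F.seg k x x' := by
  have hx := hs (left_mem_seg h)
  have hx' := hs (right_mem_seg h)
  have hY : ∀ w ∈ F.seg k x x', F.Y j w = F.Y j x := fun w hw =>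
    F.Y_compat hw.1 (hs hw) h.1 hx hw.2.1
  refine ⟨⟨hx, hx', (hY _ (right_mem_seg h)).symm⟩, ?_⟩
  set y := F.Y k x with hy
  set f : ℝ → ℝ := fun t => F.T j (F.psi k t y) with hf
  set I := uIcc (F.T k x) (F.T k x') with hI
  have hmem : ∀ t ∈ I, F.psi k t y ∈ F.seg k x x' := fun t ht => by
    rw [seg_eq_image]; exact ⟨t, ht, rfl⟩
  have hfc : ContinuousOn f I := by
    refine (F.continuousOn_T j).comp (F.continuous_psi_left k y).continuousOn ?_
    exact fun t ht => hs (hmem t ht)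
  have hinj : InjOn f I := by
    intro t ht t' ht' he
    have := F.eq_of_TY (hs (hmem t ht)) (hs (hmem t' ht')) he
      ((hY _ (hmem t ht)).trans (hY _ (hmem t' ht')).symm)
    have h2 := congrArg (F.T k) this
    simpa using h2
  have h0 : f (F.T k x) = F.T j x := by simp only [hf, hy]; rw [F.psi_T_Y h.1]
  have h1 : f (F.T k x') = F.T j x' := by simp only [hf, hy]; rw [h.2.2, F.psi_T_Y h.2.1]
  have himg : f '' I = uIcc (F.T j x) (F.T j x') := by
    apply Subset.antisymm
    · have : MonotoneOn f I ∨ AntitoneOn f I := by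
        rcases hfc.strictMonoOn_of_injOn_Icc' (min_le_max) hinj with h | h
        · exact Or.inl h.monotoneOn
        · exact Or.inr h.antitoneOn
      rintro _ ⟨t, ht, rfl⟩
      rw [← h0, ← h1]
      rcases this with h | h
      · exact h.mapsTo_uIcc ht
      · exact h.mapsTo_uIcc ht
    · rw [← h0, ← h1]
      exact intermediate_value_uIcc hfc
  ext w
  constructor
  · rintro ⟨hw1, hw2, hw3⟩
    rw [← himg] at hw3
    obtain ⟨t, ht, htw⟩ := hw3
    have : F.psi k t y = w := F.eq_of_TY (hs (hmem t ht)) hw1 htw ((hY _ (hmem t ht)).trans hw2.symm)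
    rw [← this]; exact hmem t ht
  · intro hw
    refine ⟨hs hw, hY w hw, ?_⟩
    rw [← himg]
    refine ⟨F.T k w, hw.2.2, ?_⟩
    simp only [hf, hy]
    rw [← hw.2.1, F.psi_T_Y hw.1]

end Foliation

/-! ### Generic lemmas on ω₁-like orders -/

set_option linter.unusedSectionVars false

section LamLemmas

variable {Λ : Type u} [ConditionallyCompleteLinearOrder Λ] [TopologicalSpace Λ] [OrderTopology Λ]
  [DenselyOrdered Λ] [NoMaxOrder Λ] [NoMinOrder Λ] [Nonempty Λ]

theorem lam_limit (hω : ∀ s : Set Λ, s.Countable → ∃ b, ∀ a ∈ s, a < b)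
    (β : ℕ → Λ) (hβ : StrictMono β) :
    ∃ γ, Tendsto β atTop (𝓝 γ) ∧ (∀ n, β n < γ) ∧ ∀ δ, δ < γ → ∃ n, δ < β n := by
  obtain ⟨b, hb⟩ := hω (range β) (countable_range β)
  have hbd : BddAbove (range β) := ⟨b, fun a ha => (hb a ha).le⟩
  refine ⟨⨆ n, β n, tendsto_atTop_ciSup hβ.monotone hbd, fun n => ?_, fun δ hδ => ?_⟩
  · exact (hβ (Nat.lt_succ_self n)).trans_le (le_ciSup hbd _)
  · exact exists_lt_of_lt_ciSup hδ

theorem lam_pigeon (hω : ∀ s : Set Λ, s.Countable → ∃ b, ∀ a ∈ s, a < b)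
    {κ : Type*} (C : Set κ) (hC : C.Countable) (P : κ → Λ → Prop)
    (hP : ∀ c ρ ρ', ρ' ≤ ρ → P c ρ → P c ρ') (h : ∀ ρ, ∃ c ∈ C, P c ρ) :
    ∃ c ∈ C, ∀ ρ, P c ρ := by
  by_contra hcon
  push Not at hcon
  choose! g hg using hcon
  obtain ⟨b, hb⟩ := hω (g '' C) (hC.image g)
  obtain ⟨c, hc, hcb⟩ := h b
  exact hg c hc (hP c _ _ (hb _ ⟨c, hc, rfl⟩).le hcb)

theorem lam_reflect (hω : ∀ s : Set Λ, s.Countable → ∃ b, ∀ a ∈ s, a < b)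
    (P : Λ → Λ → Prop) (hP : ∀ β β' γ γ', β ≤ β' → γ' ≤ γ → P β γ → P β' γ')
    (h : ∀ γ, ∃ β < γ, P β γ) : ∃ β, ∀ γ, P β γ := by
  by_contra hcon
  push Not at hcon
  choose g hg using hcon
  choose s hs using fun a : Λ => exists_gt a
  let β : ℕ → Λ := fun n => Nat.rec (Classical.arbitrary Λ) (fun _ b => max (g b) (s b)) n
  have hβ : StrictMono β := strictMono_nat_of_lt_succ fun n =>
    (hs (β n)).trans_le (le_max_right (g (β n)) _)
  obtain ⟨γ, -, h1, h2⟩ := lam_limit hω β hβ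
  obtain ⟨b, hb, hbP⟩ := h γ
  obtain ⟨n, hn⟩ := h2 b hb
  refine hg (β n) (hP _ _ _ _ hn.le ?_ hbP)
  exact le_trans (le_max_left (g (β n)) (s (β n))) (h1 (n+1)).le

theorem lam_evconst (hω : ∀ s : Set Λ, s.Countable → ∃ b, ∀ a ∈ s, a < b)
    {X : Type*} [MetricSpace X] (f : Λ → X) (b : Λ)
    (hf : ∀ (γ : Λ) (g : ℕ → Λ), StrictMono g → (∀ n, b ≤ g n) → (∀ n, g n < γ) →
      Tendsto g atTop (𝓝 γ) → Tendsto (fun n => f (g n)) atTop (𝓝 (f γ))) :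
    ∃ a, b ≤ a ∧ ∀ γ, a ≤ γ → f γ = f a := by
  have key : ∀ ε > (0:ℝ), ∃ a, b ≤ a ∧ ∀ γ, a ≤ γ → dist (f γ) (f a) < ε := by
    intro ε hε
    by_contra hcon
    push Not at hcon
    choose! g hg hg' using hcon
    let β : ℕ → Λ := fun n => Nat.rec b (fun _ b => g b) n
    have hb : ∀ n, b ≤ β n := fun n => by
      induction n with
      | zero => exact le_rfl
      | succ n ih => exact ih.trans (hg _ ih)
    have hβ : StrictMono β := strictMono_nat_of_lt_succ fun n => by
      refine lt_of_le_of_ne (hg _ (hb n)) fun he => ?_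
      have := hg' _ (hb n)
      rw [← show β (n+1) = g (β n) from rfl] at this
      have he' : β n = β (n+1) := he
      rw [← he', dist_self] at this
      linarith
    obtain ⟨γ, h0, h1, -⟩ := lam_limit hω β hβ
    have hc := (hf γ β hβ hb h1 h0).cauchySeq
    rw [Metric.cauchySeq_iff'] at hc
    obtain ⟨N, hN⟩ := hc (ε/2) (by linarith)
    have h3 := hN (N+1) (by omega)
    have := hg' _ (hb N)
    have h4 : dist (f (β (N+1))) (f (β N)) ≥ ε := this
    linarith
  choose! a ha ha' using key
  obtain ⟨c, hc⟩ := hω (insert b (range fun n : ℕ => a (1/((n:ℝ)+1))))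
    ((countable_range _).insert b)
  refine ⟨c, (hc b (mem_insert _ _)).le, fun γ hγ => ?_⟩
  rw [← dist_le_zero]
  refine le_of_forall_pos_le_add fun ε hε => ?_
  obtain ⟨n, hn⟩ := exists_nat_one_div_lt (half_pos hε)
  have hp : (0:ℝ) < 1/((n:ℝ)+1) := by positivity
  have hac : a (1/((n:ℝ)+1)) < c := hc _ (mem_insert_of_mem _ ⟨n, rfl⟩)
  have h1 := ha' _ hp γ (hac.le.trans hγ)
  have h2 := ha' _ hp c hac.le
  have := dist_triangle_right (f γ) (f c) (f (a (1/((n:ℝ)+1))))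
  linarith

end LamLemmas

set_option linter.unusedSectionVars false
/-! ### Vertical points -/

/-- countable sets are strictly bounded -/
class OmegaLike (Λ : Type u) [LT Λ] : Prop where
  bdd : ∀ s : Set Λ, s.Countable → ∃ b, ∀ a ∈ s, a < b

namespace Foliation

section Vert

variable {S : Type} [MetricSpace S] [CompactSpace S]
variable {Λ : Type 1} [ConditionallyCompleteLinearOrder Λ] [TopologicalSpace Λ] [OrderTopology Λ]
  [DenselyOrdered Λ] [NoMaxOrder Λ] [NoMinOrder Λ] [Nonempty Λ] [OmegaLike Λ]
  (F : Foliation (S × Λ) 1 2)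

/-- good sets -/
def Good (V : Set S) (β : Λ) : Prop := ∀ γ, ∃ i, V ×ˢ Ioc β γ ⊆ F.U i

theorem Good.mono {V : Set S} {β β' : Λ} (h : F.Good V β) (hb : β ≤ β') : F.Good V β' := fun γ => by
  obtain ⟨i, hi⟩ := h γ
  exact ⟨i, (prod_mono_right (Ioc_subset_Ioc_left hb)).trans hi⟩

theorem good_point (z : S) : ∃ V, IsOpen V ∧ z ∈ V ∧ ∃ β, F.Good V β := by
  have hsc : SecondCountableTopology S := inferInstance
  let B := TopologicalSpace.countableBasis S
  have hB : TopologicalSpace.IsTopologicalBasis B := TopologicalSpace.isBasis_countableBasis S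
  have h1 : ∀ γ : Λ, ∃ β < γ, ∃ V ∈ B, z ∈ V ∧ ∃ i, V ×ˢ Ioc β γ ⊆ F.U i := by
    intro γ
    obtain ⟨i, hi⟩ := F.covers (z, γ)
    have hn := (F.isOpen i).mem_nhds hi
    rw [mem_nhds_prod_iff] at hn
    obtain ⟨u, hu, v, hv, huv⟩ := hn
    obtain ⟨V, hV, hzV, hVu⟩ := hB.mem_nhds_iff.1 hu
    obtain ⟨β, hβ, hβv⟩ := exists_Ioc_subset_of_mem_nhds hv (exists_lt γ)
    exact ⟨β, hβ, V, hV, hzV, i, (prod_mono hVu hβv).trans huv⟩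
  obtain ⟨β, hβ⟩ := lam_reflect OmegaLike.bdd
    (fun β γ => ∃ V ∈ B, z ∈ V ∧ ∃ i, V ×ˢ Ioc β γ ⊆ F.U i)
    (by
      rintro β β' γ γ' h1 h2 ⟨V, hV, hz, i, hi⟩
      exact ⟨V, hV, hz, i, (prod_mono_right (Ioc_subset_Ioc h1 h2)).trans hi⟩) h1
  obtain ⟨V, hV, h⟩ := lam_pigeon OmegaLike.bdd B (TopologicalSpace.countable_countableBasis S)
    (fun V γ => z ∈ V ∧ ∃ i, V ×ˢ Ioc β γ ⊆ F.U i)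
    (by
      rintro V γ γ' h2 ⟨hz, i, hi⟩
      exact ⟨hz, i, (prod_mono_right (Ioc_subset_Ioc le_rfl h2)).trans hi⟩) hβ
  exact ⟨V, hB.isOpen hV, (h (Classical.arbitrary Λ)).1, β, fun γ => (h γ).2⟩

theorem good_cover : ∃ (𝒱 : Set (Set S)) (β : Λ), 𝒱.Countable ∧
    (∀ V ∈ 𝒱, IsOpen V ∧ F.Good V β) ∧ ∀ z, ∃ V ∈ 𝒱, z ∈ V := by
  choose V hVo hVz β hβ using F.good_point
  obtain ⟨t, ht⟩ := isCompact_univ.elim_nhds_subcover V (fun z _ => (hVo z).mem_nhds (hVz z))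
  obtain ⟨b, hb⟩ := OmegaLike.bdd (β '' (t : Set S)) (t.countable_toSet.image β)
  refine ⟨V '' (t : Set S), b, t.countable_toSet.image V, ?_, fun z => ?_⟩
  · rintro _ ⟨z, hz, rfl⟩
    exact ⟨hVo z, (hβ z).mono F (hb _ ⟨z, hz, rfl⟩).le⟩
  · have := ht.2 (mem_univ z)
    simp only [mem_iUnion] at this
    obtain ⟨x, hx, hz⟩ := this
    exact ⟨_, ⟨x, hx, rfl⟩, hz⟩

/-- vertical from `a` on -/
def Vert (z : S) (a : Λ) : Prop := ∀ γ γ', a < γ → a < γ' → ∀ i, (z, γ) ∈ F.U i →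
  (z, γ') ∈ F.U i → F.Y i (z, γ) = F.Y i (z, γ')

theorem Vert.mono {z : S} {a a' : Λ} (h : F.Vert z a) (hb : a ≤ a') : F.Vert z a' :=
  fun γ γ' h1 h2 => h γ γ' (hb.trans_lt h1) (hb.trans_lt h2)

theorem vert_of_exists {z : S} {a : Λ}
    (h : ∀ γ γ', a < γ → a < γ' → ∃ i, (z, γ) ∈ F.U i ∧
      (z, γ') ∈ F.U i ∧ F.Y i (z, γ) = F.Y i (z, γ')) : F.Vert z a := by
  intro γ γ' h1 h2 j hj hj'
  obtain ⟨i, hi, hi', he⟩ := h γ γ' h1 h2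
  exact F.Y_compat hi hj hi' hj' he

theorem vert_closed (a : Λ) : IsClosed {z | F.Vert z a} := by
  rw [← closure_subset_iff_isClosed]
  intro z hz γ γ' h1 h2 i hi hi'
  rw [mem_closure_iff_frequently] at hz
  have c1 : ContinuousAt (fun z => (z, γ) : S → S × Λ) z := by fun_prop
  have c2 : ContinuousAt (fun z => (z, γ') : S → S × Λ) z := by fun_prop
  have e1 := c1.eventually ((F.isOpen i).mem_nhds hi)
  have e2 := c2.eventually ((F.isOpen i).mem_nhds hi')
  have t1 : Tendsto (fun z => F.Y i (z, γ)) (𝓝 z) (𝓝 (F.Y i (z, γ))) :=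
    ContinuousAt.comp (f := fun z => (z, γ)) (F.continuousAt_Y hi) c1
  have t2 : Tendsto (fun z => F.Y i (z, γ')) (𝓝 z) (𝓝 (F.Y i (z, γ'))) :=
    ContinuousAt.comp (f := fun z => (z, γ')) (F.continuousAt_Y hi') c2
  refine tendsto_nhds_unique_of_frequently_eq t1 t2 ?_
  refine (hz.and_eventually (e1.and e2)).mono ?_
  rintro x ⟨hx, hx1, hx2⟩
  exact hx γ γ' h1 h2 i hx1 hx2

theorem vert_open_aux {V : Set S} (hV : IsOpen V) {β a b c : Λ} (hG : F.Good V β) {z : S}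
    (hz : z ∈ V) (hv : F.Vert z a) (hβa : β ≤ a) (hab : a < b) (hbc : b < c) (γ : Λ) (hγ : c ≤ γ) :
    ∀ᶠ z' in 𝓝 z, z' ∈ V ∧ ∀ δ ∈ Icc b γ, ∃ z'' ∈ V, ∃ i, (z'', b) ∈ F.U i ∧ (z', δ) ∈ F.U i ∧
      F.Y i (z'', b) = F.Y i (z', δ) := by
  obtain ⟨i, hi⟩ := hG γ
  obtain ⟨c1, hac1, hc1b⟩ := exists_between hab
  have hbγ : b ≤ γ := hbc.le.trans hγ
  have hU : ∀ z' ∈ V, ∀ δ, a < δ → δ ≤ γ → (z', δ) ∈ F.U i := fun z' hz' δ h1 h2 =>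
    hi ⟨hz', hβa.trans_lt h1, h2⟩
  set y0 := F.Y i (z, b) with hy0
  have hy : ∀ δ, a < δ → δ ≤ γ → F.Y i (z, δ) = y0 := fun δ h1 h2 =>
    hv δ b h1 hab i (hU z hz δ h1 h2) (hU z hz b hab hbγ)
  set t1 := F.T i (z, c1)
  set t2 := F.T i (z, c)
  have hcont : ContinuousOn (fun δ => F.T i (z, δ)) (uIcc c1 c) := by
    refine (F.continuousOn_T i).comp (by fun_prop) ?_
    intro δ hδ
    rw [uIcc_of_le (hc1b.trans hbc).le] at hδ
    exact hU z hz δ (hac1.trans_le hδ.1) (hδ.2.trans hγ)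
  have hpath : ∀ t ∈ uIcc t1 t2, (F.psi i t y0).1 = z := by
    intro t ht
    obtain ⟨δ, hδ, hδt⟩ := intermediate_value_uIcc hcont ht
    rw [uIcc_of_le (hc1b.trans hbc).le] at hδ
    have h1 := hac1.trans_le hδ.1
    have h2 := hδ.2.trans hγ
    have hδt' : F.T i (z, δ) = t := hδt
    rw [← hδt', ← hy δ h1 h2, F.psi_T_Y (hU z hz δ h1 h2)]
  have hc := F.continuous_psi i
  have e1 : ∀ᶠ y in 𝓝 y0, ∀ t ∈ uIcc t1 t2, (F.psi i t y).1 ∈ V := by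
    refine isCompact_uIcc.eventually_forall_of_forall_eventually ?_
    intro t ht
    have h2 : Continuous fun p : (Fin 2 → ℝ) × ℝ => (F.psi i p.2 p.1).1 :=
      continuous_fst.comp (hc.comp continuous_swap)
    have := h2.continuousAt (x := (y0, t))
    exact this.eventually (hV.mem_nhds (by simpa [hpath t ht] using hz))
  have e2 : ∀ᶠ y in 𝓝 y0, (F.psi i t1 y).2 < b := by
    have h2 : Continuous fun y => (F.psi i t1 y).2 := by
      have h3 := continuous_snd.comp (hc.comp
        (Continuous.prodMk (continuous_const (y := t1)) (continuous_id (X := Fin 2 → ℝ))))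
      exact h3
    refine h2.continuousAt.eventually (Iio_mem_nhds ?_)
    have : F.psi i t1 y0 = (z, c1) := by
      rw [← hy c1 hac1 (hc1b.le.trans hbγ)]
      exact F.psi_T_Y (hU z hz c1 hac1 (hc1b.le.trans hbγ))
    change (F.psi i t1 y0).2 < b; rw [this]; exact hc1b
  have e3 : ∀ᶠ y in 𝓝 y0, b < (F.psi i t2 y).2 := by
    have h2 : Continuous fun y => (F.psi i t2 y).2 := by
      have h3 := continuous_snd.comp (hc.comp
        (Continuous.prodMk (continuous_const (y := t2)) (continuous_id (X := Fin 2 → ℝ))))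
      exact h3
    refine h2.continuousAt.eventually (Ioi_mem_nhds ?_)
    have : F.psi i t2 y0 = (z, c) := by
      rw [← hy c (hab.trans hbc) hγ]
      exact F.psi_T_Y (hU z hz c (hab.trans hbc) hγ)
    change b < (F.psi i t2 y0).2; rw [this]; exact hbc
  have e4 : ∀ᶠ y in 𝓝 y0, ∃ z'' ∈ V, (z'', b) ∈ F.U i ∧ F.Y i (z'', b) = y := by
    filter_upwards [e1, e2, e3] with y h1 h2 h3
    have hcy : ContinuousOn (fun t => (F.psi i t y).2) (uIcc t1 t2) :=
      (continuous_snd.comp (F.continuous_psi_left i y)).continuousOn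
    obtain ⟨t, ht, htb⟩ := intermediate_value_uIcc hcy
      (show b ∈ uIcc _ _ from by rw [uIcc_of_le (h2.trans h3).le]; exact ⟨h2.le, h3.le⟩)
    have htb' : (F.psi i t y).2 = b := htb
    have hpe : ((F.psi i t y).1, b) = F.psi i t y := by rw [← htb']
    refine ⟨_, h1 t ht, ?_, ?_⟩
    · rw [hpe]; exact F.psi_mem _ _ _
    · rw [hpe]; simp
  have e5 : ∀ᶠ z' in 𝓝 z, ∀ δ ∈ Icc b γ, ∃ z'' ∈ V, (z'', b) ∈ F.U i ∧
      F.Y i (z'', b) = F.Y i (z', δ) := by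
    refine isCompact_Icc.eventually_forall_of_forall_eventually ?_
    intro δ hδ
    have h2 := F.continuousAt_Y (hU z hz δ (hab.trans_le hδ.1) hδ.2)
    have h3 : Tendsto (F.Y i) (𝓝 (z, δ)) (𝓝 y0) := by
      have h4 := h2.tendsto
      rwa [hy δ (hab.trans_le hδ.1) hδ.2] at h4
    exact h3.eventually e4
  filter_upwards [e5, hV.mem_nhds hz] with z' h1 h2
  refine ⟨h2, fun δ hδ => ?_⟩
  obtain ⟨z'', h3, h4, h5⟩ := h1 δ hδ
  exact ⟨z'', h3, i, h4, hU z' h2 δ (hab.trans_le hδ.1) hδ.2, h5⟩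

theorem vert_open {V : Set S} (hV : IsOpen V) {β a : Λ} (hG : F.Good V β) {z : S}
    (hz : z ∈ V) (hv : F.Vert z a) (hβa : β ≤ a) :
    ∀ᶠ z' in 𝓝 z, ∃ a', F.Vert z' a' := by
  have hsc : SecondCountableTopology S := inferInstance
  obtain ⟨b, hab⟩ := exists_gt a
  obtain ⟨c, hbc⟩ := exists_gt b
  let B := TopologicalSpace.countableBasis S
  have hB : TopologicalSpace.IsTopologicalBasis B := TopologicalSpace.isBasis_countableBasis S
  obtain ⟨N, hN, h⟩ := lam_pigeon OmegaLike.bdd B (TopologicalSpace.countable_countableBasis S)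
    (fun N γ => z ∈ N ∧ ∀ z' ∈ N, z' ∈ V ∧ ∀ δ ∈ Icc b γ, ∃ z'' ∈ V, ∃ i, (z'', b) ∈ F.U i ∧
      (z', δ) ∈ F.U i ∧ F.Y i (z'', b) = F.Y i (z', δ))
    (by
      rintro N γ γ' h1 ⟨hz, h2⟩
      refine ⟨hz, fun z' hz' => ⟨(h2 z' hz').1, fun δ hδ => (h2 z' hz').2 δ ⟨hδ.1, hδ.2.trans h1⟩⟩⟩)
    (by
      intro γ
      have h1 := F.vert_open_aux hV hG hz hv hβa hab hbc (max c γ) (le_max_left _ _)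
      obtain ⟨N, hN, hzN, hNs⟩ := hB.mem_nhds_iff.1 h1
      refine ⟨N, hN, hzN, fun z' hz' => ?_⟩
      have h2 := hNs hz'
      exact ⟨h2.1, fun δ hδ => h2.2 δ ⟨hδ.1, hδ.2.trans (le_max_right _ _)⟩⟩)
  filter_upwards [(hB.isOpen hN).mem_nhds (h b).1] with z' hz'
  have hz'V := ((h b).2 z' hz').1
  have hq : ∀ δ, b ≤ δ → ∃ z'' ∈ V, ∃ i, (z'', b) ∈ F.U i ∧
      (z', δ) ∈ F.U i ∧ F.Y i (z'', b) = F.Y i (z', δ) := fun δ hδ =>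
    ((h δ).2 z' hz').2 δ ⟨hδ, le_rfl⟩
  haveI : Nonempty S := ⟨z⟩
  haveI : Nonempty F.ι := ⟨(hG b).choose⟩
  choose! q hqV i' hi1 hi2 hi3 using hq
  obtain ⟨i0, hi0⟩ := hG b
  have hβb : β < b := hβa.trans_lt hab
  have hq0 : ∀ δ, b ≤ δ → (q δ, b) ∈ F.U i0 := fun δ hδ => hi0 ⟨hqV δ hδ, hβb, le_rfl⟩
  obtain ⟨a', hba', ha'⟩ := lam_evconst (Λ := Λ) OmegaLike.bdd (fun δ => F.Y i0 (q δ, b)) b (by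
    intro γ g hg hbg hgγ hlim
    obtain ⟨i, hi⟩ := hG γ
    have hbγ : b ≤ γ := (hbg 0).trans (hgγ 0).le
    have hUq : ∀ δ, b ≤ δ → (q δ, b) ∈ F.U i := fun δ hδ => hi ⟨hqV δ hδ, hβb, hbγ⟩
    have hUz : ∀ δ, b ≤ δ → δ ≤ γ → (z', δ) ∈ F.U i := fun δ h1 h2 =>
      hi ⟨hz'V, hβb.trans_le h1, h2⟩
    have hYe : ∀ δ, b ≤ δ → δ ≤ γ → F.Y i (q δ, b) = F.Y i (z', δ) := fun δ h1 h2 =>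
      F.Y_compat (hi1 δ h1) (hUq δ h1) (hi2 δ h1) (hUz δ h1 h2) (hi3 δ h1)
    set t := F.T i (q γ, b) with ht
    have l1 : Tendsto (fun n => F.Y i (z', g n)) atTop (𝓝 (F.Y i (z', γ))) := by
      have : Tendsto (fun n => ((z', g n) : S × Λ)) atTop (𝓝 (z', γ)) :=
        tendsto_const_nhds.prodMk_nhds hlim
      exact (F.continuousAt_Y (hUz γ hbγ le_rfl)).tendsto.comp this
    have l2 : Tendsto (fun n => F.psi i t (F.Y i (z', g n))) atTop (𝓝 (q γ, b)) := by
      have h1 : Tendsto (fun n => (t, F.Y i (z', g n))) atTop (𝓝 (t, F.Y i (z', γ))) :=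
        tendsto_const_nhds.prodMk_nhds l1
      have h2 := ((F.continuous_psi i).tendsto (t, F.Y i (z', γ))).comp h1
      have h3 : F.psi i t (F.Y i (z', γ)) = (q γ, b) := by
        rw [← hYe γ hbγ le_rfl, ht, F.psi_T_Y (hUq γ hbγ)]
      rw [← h3]
      exact h2
    have l3 := (F.continuousAt_Y (hq0 γ hbγ)).tendsto.comp l2
    refine l3.congr' ?_
    filter_upwards [l2.eventually ((F.isOpen i0).mem_nhds (hq0 γ hbγ))] with n hn
    refine F.Y_compat (F.psi_mem _ _ _) hn (hUq (g n) (hbg n)) (hq0 _ (hbg n)) ?_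
    rw [F.Y_psi, hYe _ (hbg n) (hgγ n).le])
  refine ⟨a', F.vert_of_exists fun γ γ' h1 h2 => ?_⟩
  obtain ⟨i, hi⟩ := hG (max γ γ')
  have k1 : b ≤ γ := hba'.trans h1.le
  have k2 : b ≤ γ' := hba'.trans h2.le
  have m1 : (z', γ) ∈ F.U i := hi ⟨hz'V, hβb.trans_le k1, le_max_left _ _⟩
  have m2 : (z', γ') ∈ F.U i := hi ⟨hz'V, hβb.trans_le k2, le_max_right _ _⟩
  have m3 : (q γ, b) ∈ F.U i := hi ⟨hqV γ k1, hβb, k1.trans (le_max_left _ _)⟩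
  have m4 : (q γ', b) ∈ F.U i := hi ⟨hqV γ' k2, hβb, k1.trans (le_max_left _ _)⟩
  refine ⟨i, m1, m2, ?_⟩
  have r1 := F.Y_compat (hi1 γ k1) m3 (hi2 γ k1) m1 (hi3 γ k1)
  have r2 := F.Y_compat (hi1 γ' k2) m4 (hi2 γ' k2) m2 (hi3 γ' k2)
  have r3 : F.Y i0 (q γ, b) = F.Y i0 (q γ', b) := (ha' γ h1.le).trans (ha' γ' h2.le).symm
  have r4 := F.Y_compat (hq0 γ k1) m3 (hq0 γ' k2) m4 r3
  rw [← r1, ← r2, r4]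

theorem vert_all [PreconnectedSpace S] (z0 : S) (a0 : Λ) (h0 : F.Vert z0 a0) :
    ∃ a, ∀ z, F.Vert z a := by
  have hsc : SecondCountableTopology S := inferInstance
  obtain ⟨𝒱, β, -, hV, hcov⟩ := F.good_cover
  let Z : Set S := {z | ∃ a, F.Vert z a}
  have hopen : IsOpen Z := by
    rw [isOpen_iff_mem_nhds]
    rintro z ⟨a, ha⟩
    obtain ⟨V, hV', hz⟩ := hcov z
    exact F.vert_open (hV V hV').1 (hV V hV').2 hz (ha.mono F (le_max_left a β)) (le_max_right _ _)
  obtain ⟨D, hDZ, hDc, hD⟩ :=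
    (TopologicalSpace.IsSeparable.of_separableSpace Z).exists_countable_dense_subset
  choose! f hf using hDZ
  obtain ⟨a, ha⟩ := OmegaLike.bdd (f '' D) (hDc.image f)
  have hZ : Z = {z | F.Vert z a} := by
    apply Subset.antisymm
    · refine hD.trans ?_
      refine closure_minimal ?_ (F.vert_closed a)
      intro z hz
      exact (hf hz).mono F (ha _ ⟨z, hz, rfl⟩).le
    · exact fun z hz => ⟨a, hz⟩
  have hcl : IsClopen Z := ⟨hZ ▸ F.vert_closed a, hopen⟩
  have := hcl.eq_univ ⟨z0, a0, h0⟩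
  refine ⟨a, fun z => ?_⟩
  have hz : z ∈ Z := this ▸ mem_univ z
  rw [hZ] at hz
  exact hz

theorem vert_conclusion [PreconnectedSpace S] (z0 : S) (a0 : Λ) (h0 : F.Vert z0 a0) :
    ∃ α : Λ, ∀ z : S, ∃ L, F.IsLeaf L ∧ {w : S × Λ | w.1 = z ∧ α < w.2} ⊆ L := by
  obtain ⟨a, ha⟩ := F.vert_all z0 a0 h0
  obtain ⟨𝒱, β, -, hV, hcov⟩ := F.good_cover
  obtain ⟨c, hc⟩ := exists_gt (max a β)
  refine ⟨max a β, fun z => ⟨_, ⟨(z, c), rfl⟩, ?_⟩⟩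
  rintro ⟨z', γ⟩ ⟨h1, h2⟩
  have h1 : z' = z := h1
  subst h1
  obtain ⟨V, hV', hz⟩ := hcov z'
  obtain ⟨i, hi⟩ := (hV V hV').2 (max c γ)
  have h2' : max a β < γ := h2
  have m1 : (z', c) ∈ F.U i := hi ⟨hz, (le_max_right _ _).trans_lt hc, le_max_left _ _⟩
  have m2 : (z', γ) ∈ F.U i := hi ⟨hz, (le_max_right _ _).trans_lt h2', le_max_right _ _⟩
  exact Relation.EqvGen.rel _ _ (F.samePlaque_of_Y m1 m2
    (ha z' c γ ((le_max_left _ _).trans_lt hc) ((le_max_left _ _).trans_lt h2') i m1 m2))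

end Vert

end Foliation

set_option linter.unusedSectionVars false
/-! ### The branch lemma -/

namespace Foliation

section Branch

variable {S : Type} [MetricSpace S] [CompactSpace S]
variable {Λ : Type 1} [ConditionallyCompleteLinearOrder Λ] [TopologicalSpace Λ] [OrderTopology Λ]
  [DenselyOrdered Λ] [NoMaxOrder Λ] [NoMinOrder Λ] [Nonempty Λ] [OmegaLike Λ]
  (F : Foliation (S × Λ) 1 2)

/-- reachability inside `V × (β, →)` along a segment of a plaque -/
def Reach (V : Set S) (β : Λ) (x x' : S × Λ) : Prop :=
  ∃ k, F.Conn k x x' ∧ F.seg k x x' ⊆ V ×ˢ Ioi β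

/-- first hitting point of level `ρ` -/
def FH (V : Set S) (β : Λ) (x0 : S × Λ) (i : F.ι) (ρ : Λ) (e : S × Λ) : Prop :=
  F.Conn i x0 e ∧ F.seg i x0 e ⊆ V ×ˢ Ioc β ρ ∧ e.2 = ρ ∧ ∀ w ∈ F.seg i x0 e, w ≠ e → w.2 < ρ

variable {F} {V : Set S} {β : Λ} {x0 : S × Λ}

theorem FH.transfer {i j : F.ι} {ρ ρ' : Λ} {e : S × Λ} (h : F.FH V β x0 i ρ e)
    (hρ : ρ ≤ ρ') (hj : V ×ˢ Ioc β ρ' ⊆ F.U j) :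
    F.FH V β x0 j ρ e ∧ F.seg j x0 e = F.seg i x0 e := by
  obtain ⟨h1, h2, h3, h4⟩ := h
  have hs : F.seg i x0 e ⊆ F.U j :=
    h2.trans ((prod_mono_right (Ioc_subset_Ioc_right hρ)).trans hj)
  obtain ⟨h5, h6⟩ := seg_transfer h1 hs
  refine ⟨⟨h5, ?_, h3, ?_⟩, h6⟩
  · rw [h6]; exact h2
  · rw [h6]; exact h4

theorem truncate {k : F.ι} {x' : S × Λ} (h : F.Conn k x0 x') (hs : F.seg k x0 x' ⊆ V ×ˢ Ioi β)
    {ρ : Λ} (h0 : x0.2 < ρ) (h1 : ρ ≤ x'.2) :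
    ∃ e ∈ F.seg k x0 x', F.FH V β x0 k ρ e := by
  set y := F.Y k x0 with hy
  let t : ℝ → ℝ := fun s => F.T k x0 + s * (F.T k x' - F.T k x0)
  have htc : Continuous t := by fun_prop
  have ht0 : t 0 = F.T k x0 := by simp [t]
  have ht1 : t 1 = F.T k x' := by simp [t]
  let l : ℝ → Λ := fun s => (F.psi k (t s) y).2
  have hlc : Continuous l := continuous_snd.comp ((F.continuous_psi_left k y).comp htc)
  have hl0 : l 0 = x0.2 := by simp only [l, ht0, hy]; rw [F.psi_T_Y h.1]
  have hl1 : l 1 = x'.2 := by simp only [l, ht1, hy]; rw [h.2.2, F.psi_T_Y h.2.1]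
  have hK : IsCompact (Icc (0:ℝ) 1 ∩ l ⁻¹' Ici ρ) :=
    isCompact_Icc.inter_right (isClosed_Ici.preimage hlc)
  obtain ⟨s, ⟨hs01, hsρ⟩, hleast⟩ := hK.exists_isLeast ⟨1, ⟨by norm_num, by norm_num⟩, by
    change ρ ≤ l 1; rw [hl1]; exact h1⟩
  have hlt : ∀ s', 0 ≤ s' → s' < s → l s' < ρ := by
    intro s' h0' hs'
    by_contra hcon
    have := hleast ⟨⟨h0', hs'.le.trans hs01.2⟩, not_lt.1 hcon⟩
    linarith
  have hls : l s = ρ := by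
    obtain ⟨s', hs', he⟩ := intermediate_value_Icc hs01.1 hlc.continuousOn
      (show ρ ∈ Icc (l 0) (l s) from ⟨by rw [hl0]; exact h0.le, hsρ⟩)
    rcases hs'.2.lt_or_eq with h' | h'
    · exact absurd he (hlt s' hs'.1 h').ne
    · rw [← h', he]
  set e := F.psi k (t s) y with he
  have hTe : F.T k e = t s := by simp [he]
  have hYe : F.Y k e = y := by simp [he]
  have hseg : ∀ s' ∈ Icc (0:ℝ) 1, t s' ∈ uIcc (F.T k x0) (F.T k x') := by
    intro s' hs'
    rw [← segment_eq_uIcc, segment_eq_image_lineMap]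
    refine ⟨s', hs', ?_⟩
    simp [t, AffineMap.lineMap_apply]; ring
  have hesg : e ∈ F.seg k x0 x' := ⟨F.psi_mem _ _ _, hYe, by rw [hTe]; exact hseg s hs01⟩
  have hw : ∀ w ∈ F.seg k x0 e, w ≠ e → w.2 < ρ := by
    intro w hw hwe
    have h3 := hw.2.2
    rw [hTe, ← ht0] at h3
    obtain ⟨s', hs', he'⟩ := intermediate_value_uIcc htc.continuousOn h3
    rw [uIcc_of_le hs01.1] at hs'
    have hwp : w = F.psi k (t s') y := by rw [he', hy, ← hw.2.1, F.psi_T_Y hw.1]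
    rcases hs'.2.lt_or_eq with h' | h'
    · have := hlt s' hs'.1 h'
      rw [hwp]; exact this
    · exact absurd (by rw [hwp, h']) hwe
  refine ⟨e, hesg, conn_of_mem_seg h hesg, ?_, hls, hw⟩
  intro w hw'
  have h5 := hs (seg_subset hesg hw')
  refine ⟨h5.1, h5.2, ?_⟩
  by_cases hwe : w = e
  · rw [hwe]; exact hls.le
  · exact (hw w hw' hwe).le

theorem nest_sign {i : F.ι} {ρ ρ' : Λ} {e e' : S × Λ} (h : F.FH V β x0 i ρ e)
    (h' : F.FH V β x0 i ρ' e') (hρ : ρ ≤ ρ')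
    (hsgn : F.T i x0 < F.T i e ↔ F.T i x0 < F.T i e') : e ∈ F.seg i x0 e' := by
  have key : e ∈ F.seg i x0 e' ∨ e' ∈ F.seg i x0 e := by
    have hY : F.Y i e = F.Y i x0 := h.1.2.2.symm
    have hY' : F.Y i e' = F.Y i x0 := h'.1.2.2.symm
    have : F.T i e ∈ uIcc (F.T i x0) (F.T i e') ∨ F.T i e' ∈ uIcc (F.T i x0) (F.T i e) := by
      rw [mem_uIcc, mem_uIcc]
      by_cases hc : F.T i x0 < F.T i e
      · have hc' := hsgn.1 hc
        rcases le_total (F.T i e) (F.T i e') with h1 | h1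
        · exact Or.inl (Or.inl ⟨hc.le, h1⟩)
        · exact Or.inr (Or.inl ⟨hc'.le, h1⟩)
      · have hc' : ¬ F.T i x0 < F.T i e' := fun h => hc (hsgn.2 h)
        rcases le_total (F.T i e) (F.T i e') with h1 | h1
        · exact Or.inr (Or.inr ⟨h1, not_lt.1 hc'⟩)
        · exact Or.inl (Or.inr ⟨h1, not_lt.1 hc⟩)
    rcases this with h1 | h1
    · exact Or.inl ⟨h.1.2.1, hY, h1⟩
    · exact Or.inr ⟨h'.1.2.1, hY', h1⟩
  rcases key with h1 | h1
  · exact h1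
  · by_cases hee : e' = e
    · rw [hee]; exact right_mem_seg h.1
    · have := h.2.2.2 e' h1 hee
      rw [h'.2.2.1] at this
      exact absurd this (not_lt.2 hρ)

theorem sign_of_mem {i : F.ι} {e0 e : S × Λ} (hx0 : x0 ∈ F.U i) (hne : e0 ≠ x0)
    (h : e0 ∈ F.seg i x0 e) :
    F.T i x0 < F.T i e0 ↔ F.T i x0 < F.T i e := by
  have hT : F.T i e0 ≠ F.T i x0 := fun hh => hne (F.eq_of_TY h.1 hx0 hh h.2.1)
  have h2 := h.2.2
  rw [mem_uIcc] at h2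
  constructor
  · intro h3
    rcases h2 with h2 | h2
    · exact h3.trans_le h2.2
    · exact absurd h3 (not_lt.2 h2.2)
  · intro h3
    rcases h2 with h2 | h2
    · exact lt_of_le_of_ne h2.1 hT.symm
    · linarith [h2.1, h2.2]

theorem nest {i : F.ι} {ρ ρ' : Λ} {e e' e0 : S × Λ} (h : F.FH V β x0 i ρ e)
    (h' : F.FH V β x0 i ρ' e') (hρ : ρ ≤ ρ') (hne : e0 ≠ x0)
    (h0 : e0 ∈ F.seg i x0 e) (h0' : e0 ∈ F.seg i x0 e') : e ∈ F.seg i x0 e' :=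
  nest_sign h h' hρ ((sign_of_mem h.1.1 hne h0).symm.trans (sign_of_mem h.1.1 hne h0'))

theorem branch (hG : F.Good V β) 
    (h : ∀ ρ, ∃ x', ρ < x'.2 ∧ F.Reach V β x0 x') : ∃ z a, F.Vert z a := by
  obtain ⟨ρ0, hρ0⟩ := exists_gt x0.2
  obtain ⟨i0, hi0⟩ := hG ρ0
  have hcount : {e | F.FH V β x0 i0 ρ0 e}.Countable := by
    refine countable_of_injective_of_countable_image (f := fun e => F.T i0 x0 < F.T i0 e) ?_
      (to_countable _)
    intro e he e' he' hee
    have hee' : (F.T i0 x0 < F.T i0 e) = (F.T i0 x0 < F.T i0 e') := hee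
    have h1 := nest_sign he he' le_rfl (by rw [hee'])
    by_contra hne
    have := he'.2.2.2 e h1 hne
    rw [he.2.2.1] at this
    exact lt_irrefl _ this
  obtain ⟨e0, he0, hE⟩ := lam_pigeon OmegaLike.bdd _ hcount
    (fun e0 ρ => ρ0 < ρ → F.FH V β x0 i0 ρ0 e0 → ∃ i e, V ×ˢ Ioc β ρ ⊆ F.U i ∧
      F.FH V β x0 i ρ e ∧ e0 ∈ F.seg i x0 e)
    (by
      intro e0 ρ ρ' hρ hP hρ0' he0
      obtain ⟨i, e, hi, he, hes⟩ := hP (hρ0'.trans_le hρ) he0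
      obtain ⟨e', he's, he'⟩ := truncate he.1 (he.2.1.trans (prod_mono_right Ioc_subset_Ioi_self))
        (hρ0.trans hρ0') (by rw [he.2.2.1]; exact hρ)
      refine ⟨i, e', (prod_mono_right (Ioc_subset_Ioc_right hρ)).trans hi, he', ?_⟩
      have hne : e0 ≠ x0 := fun hh => by
        have := he0.2.2.1; rw [hh] at this; exact hρ0.ne this
      have hne' : e' ≠ x0 := fun hh => by
        have := he'.2.2.1; rw [hh] at this; exact (hρ0.trans hρ0').ne this
      have hsgn := (sign_of_mem he.1.1 hne hes).trans (sign_of_mem he.1.1 hne' he's).symm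
      exact nest_sign (he0.transfer (hρ0'.trans_le hρ).le hi).1 he' hρ0'.le hsgn)
    (by
      intro ρ
      obtain ⟨x', hx', k, hk, hks⟩ := h (max ρ ρ0)
      obtain ⟨e, hes, he⟩ := truncate hk hks (hρ0.trans_le (le_max_right ρ ρ0)) hx'.le
      obtain ⟨i, hi⟩ := hG (max ρ ρ0)
      have hei := (he.transfer le_rfl hi).1
      obtain ⟨e0, he0s, he0⟩ := truncate hei.1
        (hei.2.1.trans (prod_mono_right Ioc_subset_Ioi_self)) hρ0
        (by rw [hei.2.2.1]; exact le_max_right _ _)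
      refine ⟨e0, (he0.transfer le_rfl hi0).1, fun hρ _ => ?_⟩
      rw [max_eq_left hρ.le] at hei hi
      exact ⟨i, e, hi, hei, he0s⟩)
  have hE' : ∀ ρ, ρ0 < ρ → ∃ e, ∀ i ρ', ρ ≤ ρ' → V ×ˢ Ioc β ρ' ⊆ F.U i →
      F.FH V β x0 i ρ e ∧ e0 ∈ F.seg i x0 e := by
    intro ρ hρ
    obtain ⟨i, e, -, h2, h3⟩ := hE ρ hρ he0
    refine ⟨e, fun j ρ' h4 h5 => ?_⟩
    have := h2.transfer h4 h5
    exact ⟨this.1, by rw [this.2]; exact h3⟩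
  have : Nonempty S := ⟨x0.1⟩
  choose! E hEE using hE'
  have hne : e0 ≠ x0 := fun hh => by
    have := he0.2.2.1; rw [hh] at this; exact hρ0.ne this
  have hlev : ∀ ρ, ρ0 < ρ → (E ρ).2 = ρ := fun ρ hρ => by
    obtain ⟨i, hi⟩ := hG ρ
    exact (hEE ρ hρ i ρ le_rfl hi).1.2.2.1
  obtain ⟨b, hb⟩ := exists_gt ρ0
  obtain ⟨a, hba, ha⟩ := lam_evconst (Λ := Λ) OmegaLike.bdd (fun ρ => (E ρ).1) b (by
    intro γ g hg hbg hgγ hlim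
    have hγ : ρ0 < γ := (hb.trans_le (hbg 0)).trans (hgγ 0)
    obtain ⟨i, hi⟩ := hG γ
    have hFγ := hEE γ hγ i γ le_rfl hi
    have hmem : ∀ n, E (g n) ∈ F.seg i x0 (E γ) := fun n => by
      have h1 := hEE (g n) (hb.trans_le (hbg n)) i γ (hgγ n).le hi
      exact nest h1.1 hFγ.1 (hgγ n).le hne h1.2 hFγ.2
    have hT : Tendsto (fun n => E (g n)) atTop (𝓝 (E γ)) := by
      refine (F.isCompact_seg i x0 (E γ)).tendsto_nhds_of_unique_mapClusterPt
        (Eventually.of_forall hmem) ?_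
      intro w hw hwc
      by_contra hcon
      have h1 := hFγ.1.2.2.2 w hw hcon
      have h2 : MapClusterPt w.2 atTop (fun n => (E (g n)).2) :=
        hwc.continuousAt_comp (f := Prod.snd) continuous_snd.continuousAt
      have h3 : (fun n => (E (g n)).2) = g := funext fun n => hlev _ (hb.trans_le (hbg n))
      rw [h3] at h2
      have h4 : ClusterPt w.2 (𝓝 γ) := ClusterPt.mono h2 hlim
      have h5 : w.2 = γ := eq_of_nhds_neBot h4
      exact h1.ne h5
    exact (continuous_fst.tendsto _).comp hT)
  have hEz : ∀ γ, a ≤ γ → E γ = ((E a).1, γ) := fun γ hγ =>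
    Prod.ext (ha γ hγ) (hlev γ (hb.trans_le (hba.trans hγ)))
  refine ⟨(E a).1, a, F.vert_of_exists fun γ γ' h1 h2 => ?_⟩
  obtain ⟨i, hi⟩ := hG (max γ γ')
  have r1 := hEE γ (hb.trans (hba.trans_lt h1)) i _ (le_max_left _ _) hi
  have r2 := hEE γ' (hb.trans (hba.trans_lt h2)) i _ (le_max_right _ _) hi
  rw [← hEz γ h1.le, ← hEz γ' h2.le]
  exact ⟨i, r1.1.1.2.1, r2.1.1.2.1, r1.1.1.2.2.symm.trans r2.1.1.2.2⟩

end Branch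

end Foliation

set_option linter.unusedSectionVars false
/-! ### A horizontal level -/

namespace Foliation

section Horiz

variable {S : Type} [MetricSpace S] [CompactSpace S]
variable {Λ : Type 1} [ConditionallyCompleteLinearOrder Λ] [TopologicalSpace Λ] [OrderTopology Λ]
  [DenselyOrdered Λ] [NoMaxOrder Λ] [NoMinOrder Λ] [Nonempty Λ] [OmegaLike Λ]
  (F : Foliation (S × Λ) 1 2)

theorem reach_open {V : Set S} (hV : IsOpen V) (β ρ : Λ) :
    IsOpen {x | ∃ x', ρ < x'.2 ∧ F.Reach V β x x'} := by
  rw [isOpen_iff_mem_nhds]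
  rintro x ⟨x', hx', k, hk, hks⟩
  set T' := F.T k x'
  have hW : IsOpen (V ×ˢ Ioi β) := hV.prod isOpen_Ioi
  have hU := (F.isOpen k).mem_nhds hk.1
  have cT := F.continuousAt_T hk.1
  have cY := F.continuousAt_Y hk.1
  have e1 : ∀ᶠ x1 in 𝓝 x, ∀ s ∈ Icc (0:ℝ) 1,
      F.psi k (F.T k x1 + s * (T' - F.T k x1)) (F.Y k x1) ∈ V ×ˢ Ioi β := by
    refine isCompact_Icc.eventually_forall_of_forall_eventually ?_
    intro s hs
    have c1 : ContinuousAt (fun p : (S × Λ) × ℝ => F.T k p.1) (x, s) :=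
      ContinuousAt.comp (g := F.T k) (f := Prod.fst) cT continuousAt_fst
    have c2 : ContinuousAt (fun p : (S × Λ) × ℝ => F.Y k p.1) (x, s) :=
      ContinuousAt.comp (g := F.Y k) (f := Prod.fst) cY continuousAt_fst
    have c3 : ContinuousAt (fun p : (S × Λ) × ℝ => F.T k p.1 + p.2 * (T' - F.T k p.1)) (x, s) :=
      c1.add (continuousAt_snd.mul (continuousAt_const.sub c1))
    have c4 := ContinuousAt.comp (f := fun p : (S × Λ) × ℝ =>
      (F.T k p.1 + p.2 * (T' - F.T k p.1), F.Y k p.1)) (F.continuous_psi k).continuousAt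
      (c3.prodMk c2)
    refine c4.eventually (hW.mem_nhds ?_)
    apply hks
    rw [seg_eq_image]
    refine ⟨F.T k x + s * (T' - F.T k x), ?_, rfl⟩
    rw [← segment_eq_uIcc, segment_eq_image_lineMap]
    refine ⟨s, hs, ?_⟩
    simp [AffineMap.lineMap_apply, T']; ring
  have e2 : ∀ᶠ x1 in 𝓝 x, ρ < (F.psi k T' (F.Y k x1)).2 := by
    have c4 := ContinuousAt.comp (f := fun x1 : S × Λ => (T', F.Y k x1))
      (F.continuous_psi k).continuousAt (continuousAt_const.prodMk cY)
    have c5 := ContinuousAt.comp (f := fun x1 : S × Λ => F.psi k T' (F.Y k x1)) (g := Prod.snd)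
      continuousAt_snd c4
    refine c5.eventually (Ioi_mem_nhds ?_)
    change ρ < (F.psi k T' (F.Y k x)).2
    rw [hk.2.2, F.psi_T_Y hk.2.1]
    exact hx'
  filter_upwards [e1, e2, hU] with x1 h1 h2 h3
  refine ⟨_, h2, k, ⟨h3, F.psi_mem _ _ _, by simp⟩, ?_⟩
  rw [seg_eq_image]
  rintro _ ⟨t, ht, rfl⟩
  rw [T_psi, ← segment_eq_uIcc, segment_eq_image_lineMap] at ht
  obtain ⟨s, hs, rfl⟩ := ht
  convert h1 s hs using 2
  simp [AffineMap.lineMap_apply]; ring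

theorem close_one {V : Set S} (hV : IsOpen V) {β : Λ} (hG : F.Good V β)
    (hn : ∀ z a, ¬ F.Vert z a) (δ : Λ) :
    ∃ ρ, ∀ x x', x.2 < δ → F.Reach V β x x' → x'.2 < ρ := by
  obtain ⟨i, hi⟩ := hG δ
  have hb : ∀ x0, ∃ ρ, ∀ x', F.Reach V β x0 x' → x'.2 ≤ ρ := by
    intro x0
    by_contra hcon
    push Not at hcon
    obtain ⟨z, a, h⟩ := branch (x0 := x0) hG (fun ρ => by
      obtain ⟨x', h1, h2⟩ := hcon ρ
      exact ⟨x', h2, h1⟩)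
    exact hn z a h
  choose r hr using hb
  have := F.secondCountable_U i
  have hsep : TopologicalSpace.IsSeparable (V ×ˢ Ioo β δ) := by
    have h1 := (TopologicalSpace.IsSeparable.of_separableSpace (univ : Set (F.U i))).image
      continuous_subtype_val
    refine h1.mono ?_
    intro x hx
    exact ⟨⟨x, hi ⟨hx.1, hx.2.1, hx.2.2.le⟩⟩, mem_univ _, rfl⟩
  obtain ⟨c, hc, hcd⟩ := hsep
  obtain ⟨ρ, hρ⟩ := OmegaLike.bdd (r '' c) (hc.image r)
  obtain ⟨ρ', hρ'⟩ := exists_gt ρ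
  refine ⟨ρ', fun x x' hx hR => ?_⟩
  by_contra hcon
  have hx' : ρ < x'.2 := hρ'.trans_le (not_lt.1 hcon)
  have hxW : x ∈ V ×ˢ Ioi β := by
    obtain ⟨k, hk, hks⟩ := hR
    exact hks (left_mem_seg hk)
  have hxc := hcd ⟨hxW.1, hxW.2, hx⟩
  rw [mem_closure_iff] at hxc
  obtain ⟨d, ⟨d', hd1, hd2⟩, hdc⟩ := hxc _ (F.reach_open hV β ρ) ⟨x', hx', hR⟩
  have h1 := hr d d' hd2
  have h2 := hρ _ ⟨d, hdc, rfl⟩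
  exact lt_irrefl _ ((h1.trans_lt h2).trans hd1)

theorem horizontal (hn : ∀ z a, ¬ F.Vert z a) :
    ∃ α : Λ, ∀ x : S × Λ, x.2 = α → ∀ k, x ∈ F.U k → ∀ s, (F.psi k s (F.Y k x)).2 = α := by
  obtain ⟨𝒱, β, h𝒱, hV, hcov⟩ := F.good_cover
  have h1 : ∀ δ, ∃ δ', δ < δ' ∧ ∀ V ∈ 𝒱, ∀ x x', x.2 < δ → F.Reach V β x x' → x'.2 < δ' := by
    intro δ
    have h2 : ∀ V ∈ 𝒱, ∃ ρ, ∀ x x', x.2 < δ → F.Reach V β x x' → x'.2 < ρ := fun V hV' =>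
      F.close_one (hV V hV').1 (hV V hV').2 hn δ
    choose! r hr using h2
    obtain ⟨δ', hδ'⟩ := OmegaLike.bdd (insert δ (r '' 𝒱)) ((h𝒱.image r).insert δ)
    refine ⟨δ', hδ' _ (mem_insert _ _), fun V hV' x x' hx hR => (hr V hV' x x' hx hR).trans
      (hδ' _ (mem_insert_of_mem _ ⟨V, hV', rfl⟩))⟩
  choose f hf hf' using h1
  let δ : ℕ → Λ := fun n => Nat.rec β (fun _ b => f b) n
  have hδ : StrictMono δ := strictMono_nat_of_lt_succ fun n => hf _
  obtain ⟨α, -, hα1, hα2⟩ := lam_limit OmegaLike.bdd δ hδ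
  have hβα : β < α := hα1 0
  have hcl : ∀ V ∈ 𝒱, ∀ x x', x.2 < α → F.Reach V β x x' → x'.2 < α := by
    intro V hV' x x' hx hR
    obtain ⟨n, hn⟩ := hα2 _ hx
    exact (hf' (δ n) V hV' x x' hn hR).trans (hα1 (n+1))
  refine ⟨α, fun x hx k hk => ?_⟩
  set y := F.Y k x with hy
  have hc := F.continuous_psi_left k y
  have hlc : Continuous fun s => (F.psi k s y).2 := continuous_snd.comp hc
  have hopen : IsOpen {s | (F.psi k s y).2 = α} := by
    rw [isOpen_iff_mem_nhds]
    intro s hs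
    have hs : (F.psi k s y).2 = α := hs
    set w := F.psi k s y with hw
    obtain ⟨V, hV', hwV⟩ := hcov w.1
    have hW : IsOpen (V ×ˢ Ioi β) := (hV V hV').1.prod isOpen_Ioi
    have hwW : F.psi k s y ∈ V ×ˢ Ioi β := ⟨hwV, by rw [← hw, mem_Ioi, hs]; exact hβα⟩
    obtain ⟨ε, hε, hball⟩ := Metric.mem_nhds_iff.1 (hc.continuousAt.preimage_mem_nhds (hW.mem_nhds hwW))
    refine Filter.mem_of_superset (Metric.ball_mem_nhds s hε) ?_
    intro s' hs'
    change (F.psi k s' y).2 = α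
    have hsub : ∀ t ∈ uIcc s s', F.psi k t y ∈ V ×ˢ Ioi β := by
      intro t ht
      apply hball
      have hconv := convex_ball s ε
      rw [← segment_eq_uIcc] at ht
      exact hconv.segment_subset (Metric.mem_ball_self hε) hs' ht
    have hR1 : F.Reach V β w (F.psi k s' y) := by
      refine ⟨k, ⟨F.psi_mem _ _ _, F.psi_mem _ _ _, by simp [hw]⟩, ?_⟩
      rw [seg_eq_image, hw, T_psi, T_psi, Y_psi]
      rintro _ ⟨t, ht, rfl⟩
      exact hsub t ht
    have hR2 : F.Reach V β (F.psi k s' y) w := by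
      refine ⟨k, ⟨F.psi_mem _ _ _, F.psi_mem _ _ _, by simp [hw]⟩, ?_⟩
      rw [seg_eq_image, hw, T_psi, T_psi, Y_psi, uIcc_comm]
      rintro _ ⟨t, ht, rfl⟩
      exact hsub t ht
    rcases lt_trichotomy (F.psi k s' y).2 α with h | h | h
    · exact absurd (hcl V hV' _ _ h hR2) (by rw [hs]; exact lt_irrefl _)
    · exact h
    · exfalso
      have ho := F.reach_open (hV V hV').1 β α
      have hmem : w ∈ {x | ∃ x', α < x'.2 ∧ F.Reach V β x x'} := ⟨_, h, hR1⟩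
      have hcw : ContinuousAt (fun l => (w.1, l) : Λ → S × Λ) α := by fun_prop
      have hwα : (w.1, α) = w := by rw [← hs]
      have := hcw.preimage_mem_nhds (t := {x | ∃ x', α < x'.2 ∧ F.Reach V β x x'})
        (by rw [hwα]; exact ho.mem_nhds hmem)
      obtain ⟨l, hl, hls⟩ := exists_Ioc_subset_of_mem_nhds this (exists_lt α)
      obtain ⟨m, hm1, hm2⟩ := exists_between hl
      obtain ⟨x', hx1, hx2⟩ := hls ⟨hm1, hm2.le⟩
      exact lt_asymm hx1 (hcl V hV' (w.1, m) x' hm2 hx2)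
  have hclosed : IsClosed {s | (F.psi k s y).2 = α} := isClosed_singleton.preimage hlc
  have huniv := IsClopen.eq_univ ⟨hclosed, hopen⟩ ⟨F.T k x, by
    change (F.psi k (F.T k x) y).2 = α; rw [hy, F.psi_T_Y hk, hx]⟩
  intro s
  have : s ∈ {s | (F.psi k s y).2 = α} := by rw [huniv]; exact mem_univ s
  exact this

end Horiz

end Foliation

/-! ### No continuous pair field on the 2-sphere -/

/-- the sphere -/
abbrev S2 : Type := Metric.sphere (0 : EuclideanSpace ℝ (Fin 3)) 1

theorem exists_log (g : ℂ → ℂ) (hg : ContinuousOn g (Metric.closedBall 0 1))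
    (h0 : ∀ z ∈ Metric.closedBall (0:ℂ) 1, g z ≠ 0) :
    ∃ G : ℂ → ℂ, ContinuousOn G (Metric.closedBall 0 1) ∧
      ∀ z ∈ Metric.closedBall (0:ℂ) 1, Complex.exp (G z) = g z := by
  have hK : IsCompact (Metric.closedBall (0:ℂ) 1) := isCompact_closedBall 0 1
  obtain ⟨z0, hz0, hmin⟩ := hK.exists_isMinOn ⟨0, by simp⟩ hg.norm
  have hm : 0 < ‖g z0‖ := norm_pos_iff.2 (h0 z0 hz0)
  obtain ⟨δ, hδ, hu⟩ := (Metric.uniformContinuousOn_iff.1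
    (hK.uniformContinuousOn_of_continuous hg)) _ hm
  obtain ⟨N, hN⟩ := exists_nat_one_div_lt hδ
  set M : ℝ := (N:ℝ) + 1 with hM
  have hMpos : 0 < M := by positivity
  let p : ℕ → ℂ → ℂ := fun k z => ((k / M : ℝ) : ℂ) * z
  have hpm : ∀ k ≤ N + 1, ∀ z ∈ Metric.closedBall (0:ℂ) 1, p k z ∈ Metric.closedBall (0:ℂ) 1 := by
    intro k hk z hz
    simp only [Metric.mem_closedBall, dist_zero_right, p] at hz ⊢
    rw [norm_mul, Complex.norm_real, Real.norm_of_nonneg (by positivity)]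
    have : (k:ℝ) / M ≤ 1 := by
      rw [div_le_one hMpos, hM]; exact_mod_cast hk
    have h2 : 0 ≤ (k:ℝ) / M := by positivity
    nlinarith [norm_nonneg z]
  have hpc : ∀ k, Continuous (p k) := fun k => by fun_prop
  have hr : ∀ k < N + 1, ∀ z ∈ Metric.closedBall (0:ℂ) 1,
      g (p (k+1) z) / g (p k z) ∈ Complex.slitPlane := by
    intro k hk z hz
    have a1 := hpm k hk.le z hz
    have a2 := hpm (k+1) hk z hz
    have hd : dist (p (k+1) z) (p k z) < δ := by
      rw [dist_eq_norm]
      have : p (k+1) z - p k z = ((1 / M : ℝ) : ℂ) * z := by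
        simp only [p]; push_cast; ring
      rw [this, norm_mul, Complex.norm_real, Real.norm_of_nonneg (by positivity)]
      simp only [Metric.mem_closedBall, dist_zero_right] at hz
      have h2 : 0 ≤ 1 / M := by positivity
      calc 1 / M * ‖z‖ ≤ 1 / M := by nlinarith [norm_nonneg z]
        _ < δ := hN
    have h3 := hu _ a2 _ a1 hd
    have h4 : ‖g z0‖ ≤ ‖g (p k z)‖ := hmin a1
    have h5 := h0 _ a1
    have h6 : ‖g (p (k+1) z) / g (p k z) - 1‖ < 1 := by
      rw [div_sub_one h5, norm_div, div_lt_one (norm_pos_iff.2 h5), ← dist_eq_norm]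
      exact h3.trans_le h4
    left
    have h7 := (abs_lt.1 ((Complex.abs_re_le_norm _).trans_lt h6)).1
    simp only [Complex.sub_re, Complex.one_re] at h7
    linarith
  refine ⟨fun z => Complex.log (g 0) + ∑ k ∈ Finset.range (N+1),
    Complex.log (g (p (k+1) z) / g (p k z)), ?_, ?_⟩
  · refine continuousOn_const.add (continuousOn_finsetSum _ fun k hk => ?_)
    have hk' := Finset.mem_range.1 hk
    refine ContinuousOn.clog (ContinuousOn.div ?_ ?_ ?_) (hr k hk')
    · exact hg.comp (hpc _).continuousOn (fun z hz => hpm _ hk' z hz)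
    · exact hg.comp (hpc _).continuousOn (fun z hz => hpm _ hk'.le z hz)
    · exact fun z hz => h0 _ (hpm _ hk'.le z hz)
  · intro z hz
    have key : ∀ n ≤ N + 1, Complex.exp (Complex.log (g 0) + ∑ k ∈ Finset.range n,
        Complex.log (g (p (k+1) z) / g (p k z))) = g (p n z) := by
      intro n
      induction n with
      | zero =>
        intro _
        simp only [Finset.range_zero, Finset.sum_empty, add_zero]
        rw [Complex.exp_log (h0 0 (by simp))]
        simp [p]
      | succ n ih =>
        intro hn
        rw [Finset.sum_range_succ, ← add_assoc, Complex.exp_add, ih (by omega),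
          Complex.exp_log (Complex.slitPlane_ne_zero (hr n (by omega) z hz))]
        have := h0 _ (hpm n (by omega) z hz)
        field_simp
    rw [key (N+1) le_rfl]
    have : ((N+1 : ℕ) / M : ℝ) = 1 := by rw [hM]; push_cast; field_simp
    simp only [p, this]; simp

/-- there is no continuous logarithm of the fourth power on the circle -/
theorem no_log_circle (E : ℝ → ℂ) (hE : Continuous E) (hper : E (2 * Real.pi) = E 0)
    (hexp : ∀ t : ℝ, Complex.exp (E t) = Complex.exp (4 * t * Complex.I)) : False := by
  have h1 : ∀ t : ℝ, ∃ n : ℤ, E t = 4 * t * Complex.I + n * (2 * Real.pi * Complex.I) := fun t =>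
    Complex.exp_eq_exp_iff_exists_int.1 (hexp t)
  choose n hn using h1
  have h2 : ∀ t, ((n t : ℤ) : ℝ) = ((E t).im - 4 * t) / (2 * Real.pi) := by
    intro t
    have h3 := congrArg Complex.im (hn t)
    simp at h3
    have hpi := Real.pi_pos
    field_simp
    linarith
  have hc : Continuous n := by
    rw [Int.isClosedEmbedding_coe_real.isEmbedding.continuous_iff]
    have : ((fun x : ℤ => (x:ℝ)) ∘ n) = fun t => ((E t).im - 4 * t) / (2 * Real.pi) := funext h2
    rw [this]
    have := Complex.continuous_im.comp hE
    fun_prop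
  have h3 : n (2 * Real.pi) = n 0 := PreconnectedSpace.constant inferInstance hc
  have h4 := h2 (2 * Real.pi)
  have h5 := h2 0
  rw [h3, h5, hper] at h4
  have hpi := Real.pi_pos
  field_simp at h4
  linarith

/-- coordinates -/
def cd (x : S2) (i : Fin 3) : ℝ := x.1 i

theorem cd_sq (x : S2) : cd x 0 ^ 2 + cd x 1 ^ 2 + cd x 2 ^ 2 = 1 := by
  have h := x.2
  rw [mem_sphere_zero_iff_norm, EuclideanSpace.norm_eq, Real.sqrt_eq_one, Fin.sum_univ_three] at h
  simpa [cd] using h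

theorem cd_ext {x y : S2} (h0 : cd x 0 = cd y 0) (h1 : cd x 1 = cd y 1) (h2 : cd x 2 = cd y 2) :
    x = y := by
  apply Subtype.ext
  ext i
  fin_cases i
  · exact h0
  · exact h1
  · exact h2

theorem cd_continuous (i : Fin 3) : Continuous fun x => cd x i := by
  unfold cd
  fun_prop

theorem cd_dist (x y : S2) (i : Fin 3) : |cd x i - cd y i| ≤ dist x y := by
  have := PiLp.norm_apply_le (x.1 - y.1) i
  rw [Subtype.dist_eq, dist_eq_norm]
  simpa [cd] using this

/-- point from coordinates -/
def mkS (a b c : ℝ) (h : a ^ 2 + b ^ 2 + c ^ 2 = 1) : S2 :=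
  ⟨!₂[a, b, c], by
    rw [mem_sphere_zero_iff_norm, EuclideanSpace.norm_eq, Real.sqrt_eq_one, Fin.sum_univ_three]
    simpa using h⟩

@[simp] theorem cd_mkS0 (a b c h) : cd (mkS a b c h) 0 = a := rfl
@[simp] theorem cd_mkS1 (a b c h) : cd (mkS a b c h) 1 = b := rfl
@[simp] theorem cd_mkS2 (a b c h) : cd (mkS a b c h) 2 = c := rfl

theorem cd_continuous_iff {X : Type*} [TopologicalSpace X] (f : X → S2)
    (h : ∀ i, Continuous fun x => cd (f x) i) : Continuous f := by
  refine Continuous.subtype_mk (f := fun x => (f x).1) ?_ _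
  have : Continuous fun x => WithLp.toLp 2 (fun i => cd (f x) i) :=
    (PiLp.continuous_toLp 2 _).comp (continuous_pi h)
  exact this

/-- inverse stereographic projection -/
def sgN (w : ℂ) : S2 :=
  mkS (2 * w.re / (w.re ^ 2 + w.im ^ 2 + 1)) (2 * w.im / (w.re ^ 2 + w.im ^ 2 + 1))
    ((w.re ^ 2 + w.im ^ 2 - 1) / (w.re ^ 2 + w.im ^ 2 + 1)) (by
      have : w.re ^ 2 + w.im ^ 2 + 1 ≠ 0 := by positivity
      field_simp; ring)

/-- inverse stereographic projection from the other pole -/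
def sgS (w : ℂ) : S2 :=
  mkS (2 * w.re / (w.re ^ 2 + w.im ^ 2 + 1)) (-(2 * w.im / (w.re ^ 2 + w.im ^ 2 + 1)))
    (-((w.re ^ 2 + w.im ^ 2 - 1) / (w.re ^ 2 + w.im ^ 2 + 1))) (by
      have : w.re ^ 2 + w.im ^ 2 + 1 ≠ 0 := by positivity
      field_simp; ring)

theorem sgN_continuous : Continuous sgN := by
  have h : ∀ w : ℂ, w.re ^ 2 + w.im ^ 2 + 1 ≠ 0 := fun w => by positivity
  have hr := Complex.continuous_re
  have hi := Complex.continuous_im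
  refine cd_continuous_iff _ fun i => ?_
  fin_cases i
  · simp only [sgN, Fin.zero_eta, cd_mkS0]; fun_prop (disch := exact h)
  · simp only [sgN, Fin.mk_one, cd_mkS1]; fun_prop (disch := exact h)
  · simp only [sgN, Fin.reduceFinMk, cd_mkS2]; fun_prop (disch := exact h)

theorem sgS_continuous : Continuous sgS := by
  have h : ∀ w : ℂ, w.re ^ 2 + w.im ^ 2 + 1 ≠ 0 := fun w => by positivity
  have hr := Complex.continuous_re
  have hi := Complex.continuous_im
  refine cd_continuous_iff _ fun i => ?_
  fin_cases i
  · simp only [sgS, Fin.zero_eta, cd_mkS0]; fun_prop (disch := exact h)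
  · simp only [sgS, Fin.mk_one, cd_mkS1]; fun_prop (disch := exact h)
  · simp only [sgS, Fin.reduceFinMk, cd_mkS2]; fun_prop (disch := exact h)

/-- stereographic projection -/
def stN (x : S2) : ℂ := ⟨cd x 0 / (1 - cd x 2), cd x 1 / (1 - cd x 2)⟩
/-- stereographic projection from the other pole -/
def stS (x : S2) : ℂ := ⟨cd x 0 / (1 + cd x 2), -(cd x 1 / (1 + cd x 2))⟩

theorem complex_mk_eq (a b : ℝ) : (⟨a, b⟩ : ℂ) = (a : ℂ) + b * Complex.I := by
  apply Complex.ext <;> simp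

theorem stN_continuousAt {x : S2} (h : cd x 2 < 1) : ContinuousAt stN x := by
  have h0 := (cd_continuous 0).continuousAt (x := x)
  have h1 := (cd_continuous 1).continuousAt (x := x)
  have h2 := (cd_continuous 2).continuousAt (x := x)
  have h3 : 1 - cd x 2 ≠ 0 := by linarith
  have e : stN = fun x => ((cd x 0 / (1 - cd x 2) : ℝ) : ℂ) + ((cd x 1 / (1 - cd x 2) : ℝ) : ℂ) *
    Complex.I := funext fun x => complex_mk_eq _ _
  rw [e]
  refine ContinuousAt.add ?_ (ContinuousAt.mul ?_ continuousAt_const)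
  · exact Complex.continuous_ofReal.continuousAt.comp
      (f := fun x => cd x 0 / (1 - cd x 2)) (h0.div (continuousAt_const.sub h2) h3)
  · exact Complex.continuous_ofReal.continuousAt.comp
      (f := fun x => cd x 1 / (1 - cd x 2)) (h1.div (continuousAt_const.sub h2) h3)

theorem stS_continuousAt {x : S2} (h : -1 < cd x 2) : ContinuousAt stS x := by
  have h0 := (cd_continuous 0).continuousAt (x := x)
  have h1 := (cd_continuous 1).continuousAt (x := x)
  have h2 := (cd_continuous 2).continuousAt (x := x)
  have h3 : 1 + cd x 2 ≠ 0 := by linarith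
  have e : stS = fun x => ((cd x 0 / (1 + cd x 2) : ℝ) : ℂ) +
    ((-(cd x 1 / (1 + cd x 2)) : ℝ) : ℂ) * Complex.I := funext fun x => complex_mk_eq _ _
  rw [e]
  refine ContinuousAt.add ?_ (ContinuousAt.mul ?_ continuousAt_const)
  · exact Complex.continuous_ofReal.continuousAt.comp
      (f := fun x => cd x 0 / (1 + cd x 2)) (h0.div (continuousAt_const.add h2) h3)
  · exact Complex.continuous_ofReal.continuousAt.comp
      (f := fun x => -(cd x 1 / (1 + cd x 2))) (h1.div (continuousAt_const.add h2) h3).neg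

theorem st_mul {x : S2} (h : cd x 2 < 1) (h' : -1 < cd x 2) : stN x * stS x = 1 := by
  have h3 : 1 - cd x 2 ≠ 0 := by linarith
  have h4 : 1 + cd x 2 ≠ 0 := by linarith
  have h5 := cd_sq x
  apply Complex.ext
  · simp [stN, stS]
    field_simp
    linarith
  · simp [stN, stS]
    field_simp
    ring

theorem st_inj_aux {a b c a' b' c' : ℝ} (h : a ^ 2 + b ^ 2 + c ^ 2 = 1)
    (h' : a' ^ 2 + b' ^ 2 + c' ^ 2 = 1) (hc : c < 1) (hc' : c' < 1)
    (h1 : a / (1 - c) = a' / (1 - c')) (h2 : b / (1 - c) = b' / (1 - c')) :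
    a = a' ∧ b = b' ∧ c = c' := by
  have h3 : 1 - c ≠ 0 := by linarith
  have h4 : 1 - c' ≠ 0 := by linarith
  set p := a / (1 - c) with hp
  set q := b / (1 - c) with hq
  have ea : a = p * (1 - c) := by rw [hp]; field_simp
  have eb : b = q * (1 - c) := by rw [hq]; field_simp
  have ea' : a' = p * (1 - c') := by rw [h1]; field_simp
  have eb' : b' = q * (1 - c') := by rw [h2]; field_simp
  have k1 : (p ^ 2 + q ^ 2) * (1 - c) = 1 + c := by
    apply mul_right_cancel₀ h3
    rw [ea, eb] at h
    linarith
  have k2 : (p ^ 2 + q ^ 2) * (1 - c') = 1 + c' := by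
    apply mul_right_cancel₀ h4
    rw [ea', eb'] at h'
    linarith
  have hcc : c = c' := by
    have : (p ^ 2 + q ^ 2 + 1) * (c - c') = 0 := by linarith
    rcases mul_eq_zero.1 this with h | h
    · have : 0 < p ^ 2 + q ^ 2 + 1 := by positivity
      linarith
    · linarith
  exact ⟨by rw [ea, ea', hcc], by rw [eb, eb', hcc], hcc⟩

theorem stN_inj {x y : S2} (hx : cd x 2 < 1) (hy : cd y 2 < 1) (h : stN x = stN y) : x = y := by
  have h1 := congrArg Complex.re h
  have h2 := congrArg Complex.im h
  obtain ⟨r1, r2, r3⟩ := st_inj_aux (cd_sq x) (cd_sq y) hx hy h1 h2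
  exact cd_ext r1 r2 r3

theorem stS_inj {x y : S2} (hx : -1 < cd x 2) (hy : -1 < cd y 2) (h : stS x = stS y) : x = y := by
  have h1 := congrArg Complex.re h
  have h2 := congrArg Complex.im h
  simp only [stS, neg_inj] at h1 h2
  have e1 : cd x 0 ^ 2 + cd x 1 ^ 2 + (-cd x 2) ^ 2 = 1 := by rw [neg_sq]; exact cd_sq x
  have e2 : cd y 0 ^ 2 + cd y 1 ^ 2 + (-cd y 2) ^ 2 = 1 := by rw [neg_sq]; exact cd_sq y
  obtain ⟨r1, r2, r3⟩ := st_inj_aux e1 e2 (by linarith) (by linarith)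
    (by simpa using h1) (by simpa using h2)
  exact cd_ext r1 r2 (neg_inj.1 r3)

theorem sgN_level {w : ℂ} (hw : w ∈ Metric.closedBall (0:ℂ) 1) : cd (sgN w) 2 ≤ 0 := by
  have h1 : w.re ^ 2 + w.im ^ 2 ≤ 1 := by
    have h2 : ‖w‖ ≤ 1 := by simpa using hw
    have h3 := Complex.sq_norm w
    rw [Complex.normSq_apply] at h3
    nlinarith [norm_nonneg w]
  simp only [sgN, cd_mkS2]
  apply div_nonpos_of_nonpos_of_nonneg
  · linarith
  · positivity

theorem sgS_level {w : ℂ} (hw : w ∈ Metric.closedBall (0:ℂ) 1) : 0 ≤ cd (sgS w) 2 := by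
  have := sgN_level hw
  simp only [sgN, cd_mkS2] at this
  simp only [sgS, cd_mkS2]
  linarith

/-- A field of unordered pairs, locally continuous. -/
structure PairField (A B : S2 → S2) (c : ℝ) : Prop where
  ne : ∀ z, A z ≠ B z
  dA : ∀ z, dist (A z) z < c
  dB : ∀ z, dist (B z) z < c
  loc : ∀ z0, ∃ A' B' : S2 → S2, ContinuousAt A' z0 ∧ ContinuousAt B' z0 ∧
    ∀ᶠ z in 𝓝 z0, (A z = A' z ∧ B z = B' z) ∨ (A z = B' z ∧ B z = A' z)

theorem PairField.symcont {A B : S2 → S2} {c : ℝ} (h : PairField A B c) (D : S2 → S2 → ℂ)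
    (hD : ∀ a b, D a b = D b a) (z0 : S2)
    (hc : ContinuousAt (fun p : S2 × S2 => D p.1 p.2) (A z0, B z0)) :
    ContinuousAt (fun z => D (A z) (B z)) z0 := by
  obtain ⟨A', B', hA, hB, hev⟩ := h.loc z0
  have heq : (fun z => D (A' z) (B' z)) =ᶠ[𝓝 z0] fun z => D (A z) (B z) := by
    filter_upwards [hev] with z hz
    rcases hz with ⟨h1, h2⟩ | ⟨h1, h2⟩
    · rw [h1, h2]
    · rw [h1, h2, hD]
  refine ContinuousAt.congr ?_ heq
  rcases hev.self_of_nhds with ⟨h1, h2⟩ | ⟨h1, h2⟩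
  · rw [h1, h2] at hc
    exact ContinuousAt.comp (f := fun z => (A' z, B' z)) hc (hA.prodMk hB)
  · rw [h1, h2] at hc
    have : (fun z => D (A' z) (B' z)) = fun z => D (B' z) (A' z) := funext fun z => hD _ _
    rw [this]
    exact ContinuousAt.comp (f := fun z => (B' z, A' z)) hc (hB.prodMk hA)

theorem PairField.logs {A B : S2 → S2} {c : ℝ} (h : PairField A B c) (sg : ℂ → S2)
    (hsg : Continuous sg) (st : S2 → ℂ)
    (hst : ∀ w ∈ Metric.closedBall (0:ℂ) 1, ∀ x, dist x (sg w) < c → ContinuousAt st x)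
    (hinj : ∀ w ∈ Metric.closedBall (0:ℂ) 1, ∀ x y, dist x (sg w) < c → dist y (sg w) < c →
      st x = st y → x = y) :
    ∃ G : ℂ → ℂ, ContinuousOn G (Metric.closedBall 0 1) ∧
      ∀ w ∈ Metric.closedBall (0:ℂ) 1,
        Complex.exp (G w) = (st (A (sg w)) - st (B (sg w))) ^ 2 := by
  apply exists_log
  · intro w hw
    apply ContinuousAt.continuousWithinAt
    have := h.symcont (fun a b => (st a - st b) ^ 2) (fun a b => by ring) (sg w) (by
      have c1 := hst w hw _ (h.dA (sg w))
      have c2 := hst w hw _ (h.dB (sg w))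
      have c3 : ContinuousAt (fun p : S2 × S2 => st p.1) (A (sg w), B (sg w)) :=
        ContinuousAt.comp (g := st) (f := Prod.fst) c1 continuousAt_fst
      have c4 : ContinuousAt (fun p : S2 × S2 => st p.2) (A (sg w), B (sg w)) :=
        ContinuousAt.comp (g := st) (f := Prod.snd) c2 continuousAt_snd
      exact (c3.sub c4).pow 2)
    exact ContinuousAt.comp (f := sg) this hsg.continuousAt
  · intro w hw h0
    have h1 := pow_eq_zero_iff (two_ne_zero) |>.1 h0
    exact h.ne _ (hinj w hw _ _ (h.dA _) (h.dB _) (sub_eq_zero.1 h1))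

theorem stN_near {w : ℂ} (hw : ‖w‖ = 1) {x : S2} (hx : dist x (sgN w) < 1 / 100) :
    ‖stN x - w‖ ≤ 1 / 25 := by
  have h3 : w.re ^ 2 + w.im ^ 2 = 1 := by
    have h3 := Complex.sq_norm w
    rw [Complex.normSq_apply, hw] at h3
    linarith
  have k0 := (cd_dist x (sgN w) 0).trans_lt hx
  have k1 := (cd_dist x (sgN w) 1).trans_lt hx
  have k2 := (cd_dist x (sgN w) 2).trans_lt hx
  simp only [sgN, cd_mkS0, cd_mkS1, cd_mkS2, h3] at k0 k1 k2
  norm_num at k0 k1 k2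
  have k2' := abs_lt.1 k2
  have hpos : 0 < 1 - cd x 2 := by linarith [k2'.2]
  have e : stN x - w = (((cd x 0 - w.re : ℝ) : ℂ) + ((cd x 1 - w.im : ℝ) : ℂ) * Complex.I +
      ((cd x 2 : ℝ) : ℂ) * w) / ((1 - cd x 2 : ℝ) : ℂ) := by
    have hne : ((1 - cd x 2 : ℝ) : ℂ) ≠ 0 := by exact_mod_cast hpos.ne'
    rw [eq_div_iff hne, stN, complex_mk_eq]
    have hw' : w = (w.re : ℂ) + w.im * Complex.I := (Complex.re_add_im w).symm
    have hne' : (1:ℂ) - (cd x 2 : ℂ) ≠ 0 := by push_cast at hne; exact hne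
    rw [hw']
    simp only [Complex.add_re, Complex.ofReal_re, Complex.mul_re, Complex.I_re, mul_zero,
      Complex.ofReal_im, Complex.I_im, mul_one, sub_self, add_zero, Complex.add_im, Complex.mul_im,
      zero_add]
    push_cast
    field_simp
    ring
  rw [e, norm_div, Complex.norm_real, Real.norm_of_nonneg hpos.le, div_le_iff₀ hpos]
  have n1 : ‖((cd x 0 - w.re : ℝ) : ℂ) + ((cd x 1 - w.im : ℝ) : ℂ) * Complex.I +
      ((cd x 2 : ℝ) : ℂ) * w‖ ≤ |cd x 0 - w.re| + |cd x 1 - w.im| + |cd x 2| := by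
    refine (norm_add_le _ _).trans (add_le_add ((norm_add_le _ _).trans (add_le_add ?_ ?_)) ?_)
    · rw [Complex.norm_real]; rfl
    · rw [norm_mul, Complex.norm_real, Complex.norm_I, mul_one]; rfl
    · rw [norm_mul, Complex.norm_real, hw, mul_one]; rfl
  linarith [k2'.2]

theorem near_one {u v : ℂ} (hu : ‖u - 1‖ ≤ 1 / 25) (hv : ‖v - 1‖ ≤ 1 / 25) :
    (u * v) ^ 2 ∈ Complex.slitPlane := by
  have h1 : ‖u‖ ≤ 26 / 25 := by
    have := norm_add_le (u - 1) 1
    simp at this; linarith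
  have h2 : ‖u * v - 1‖ ≤ 1 / 10 := by
    have e : u * v - 1 = u * (v - 1) + (u - 1) := by ring
    rw [e]
    refine (norm_add_le _ _).trans ?_
    rw [norm_mul]
    nlinarith [norm_nonneg u, norm_nonneg (v - 1)]
  have h3 : ‖u * v + 1‖ ≤ 21 / 10 := by
    have e : u * v + 1 = (u * v - 1) + 2 := by ring
    rw [e]
    have := norm_add_le (u * v - 1) 2
    simp at this; linarith
  have h4 : ‖(u * v) ^ 2 - 1‖ < 1 := by
    have e : (u * v) ^ 2 - 1 = (u * v - 1) * (u * v + 1) := by ring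
    rw [e, norm_mul]
    nlinarith [norm_nonneg (u * v - 1), norm_nonneg (u * v + 1)]
  left
  have h7 := (abs_lt.1 ((Complex.abs_re_le_norm _).trans_lt h4)).1
  simp only [Complex.sub_re, Complex.one_re] at h7
  linarith

theorem no_pairField {A B : S2 → S2} (h : PairField A B (1 / 100)) : False := by
  have nearN : ∀ w ∈ Metric.closedBall (0:ℂ) 1, ∀ x, dist x (sgN w) < 1 / 100 → cd x 2 < 1 := by
    intro w hw x hx
    have h1 := sgN_level hw
    have h2 := (abs_lt.1 ((cd_dist x (sgN w) 2).trans_lt hx)).2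
    linarith
  have nearS : ∀ w ∈ Metric.closedBall (0:ℂ) 1, ∀ x, dist x (sgS w) < 1 / 100 → -1 < cd x 2 := by
    intro w hw x hx
    have h1 := sgS_level hw
    have h2 := (abs_lt.1 ((cd_dist x (sgS w) 2).trans_lt hx)).1
    linarith
  obtain ⟨G, hGc, hG⟩ := h.logs sgN sgN_continuous stN
    (fun w hw x hx => stN_continuousAt (nearN w hw x hx))
    (fun w hw x y hx hy he => stN_inj (nearN w hw x hx) (nearN w hw y hy) he)
  obtain ⟨H, hHc, hH⟩ := h.logs sgS sgS_continuous stS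
    (fun w hw x hx => stS_continuousAt (nearS w hw x hx))
    (fun w hw x y hx hy he => stS_inj (nearS w hw x hx) (nearS w hw y hy) he)
  let e : ℝ → ℂ := fun t => Complex.exp (t * Complex.I)
  have he1 : ∀ t, ‖e t‖ = 1 := fun t => Complex.norm_exp_ofReal_mul_I t
  have hec : Continuous e := by fun_prop
  let e' : ℝ → ℂ := fun t => (starRingEnd ℂ) (e t)
  have hec' : Continuous e' := Complex.continuous_conj.comp hec
  have hb : ∀ t, e t ∈ Metric.closedBall (0:ℂ) 1 := fun t => by simp [he1]
  have hb' : ∀ t, e' t ∈ Metric.closedBall (0:ℂ) 1 := fun t => by simp [e', he1]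
  have hsame : ∀ t, sgS (e' t) = sgN (e t) := by
    intro t
    have h3 : (e t).re ^ 2 + (e t).im ^ 2 = 1 := by
      have h3 := Complex.sq_norm (e t)
      rw [Complex.normSq_apply, he1] at h3
      linarith
    apply cd_ext
    · simp [sgS, sgN, e', h3]
    · simp [sgS, sgN, e', h3]; ring
    · simp [sgS, sgN, e', h3]
  let R : ℝ → ℂ := fun t => Complex.exp (G (e t)) / Complex.exp (H (e' t)) / (e t) ^ 4
  have hGe : Continuous fun t => G (e t) := hGc.comp_continuous hec hb
  have hHe : Continuous fun t => H (e' t) := hHc.comp_continuous hec' hb'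
  have he0 : ∀ t, e t ≠ 0 := fun t => Complex.exp_ne_zero _
  have hRc : Continuous R := by
    refine Continuous.div (Continuous.div ?_ ?_ ?_) ?_ ?_
    · exact Complex.continuous_exp.comp hGe
    · exact Complex.continuous_exp.comp hHe
    · exact fun t => Complex.exp_ne_zero _
    · fun_prop
    · exact fun t => pow_ne_zero _ (he0 t)
  have hRs : ∀ t, R t ∈ Complex.slitPlane := by
    intro t
    set a := A (sgN (e t)) with ha
    set b := B (sgN (e t)) with hb0
    have da : dist a (sgN (e t)) < 1 / 100 := h.dA _
    have db : dist b (sgN (e t)) < 1 / 100 := h.dB _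
    have da' : dist a (sgS (e' t)) < 1 / 100 := by rw [hsame]; exact da
    have db' : dist b (sgS (e' t)) < 1 / 100 := by rw [hsame]; exact db
    have ma := st_mul (nearN _ (hb t) a da) (nearS _ (hb' t) a da')
    have mb := st_mul (nearN _ (hb t) b db) (nearS _ (hb' t) b db')
    have hne : stN a - stN b ≠ 0 := fun h0 => h.ne (sgN (e t))
      (stN_inj (nearN _ (hb t) a da) (nearN _ (hb t) b db) (sub_eq_zero.1 h0))
    have na := stN_near (he1 t) da
    have nb := stN_near (he1 t) db
    have hdiv : ∀ p : ℂ, ‖p / e t - 1‖ = ‖p - e t‖ := fun p => by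
      rw [div_sub_one (he0 t), norm_div, he1, div_one]
    have key := near_one (u := stN a / e t) (v := stN b / e t) (by rw [hdiv]; exact na)
      (by rw [hdiv]; exact nb)
    have : R t = (stN a / e t * (stN b / e t)) ^ 2 := by
      simp only [R]
      rw [hG _ (hb t), hH _ (hb' t), hsame, ← ha, ← hb0]
      have a0 : stN a ≠ 0 := left_ne_zero_of_mul_eq_one ma
      have b0 : stN b ≠ 0 := left_ne_zero_of_mul_eq_one mb
      have sa : stS a = 1 / stN a := by rw [eq_div_iff a0, mul_comm]; exact ma
      have sb : stS b = 1 / stN b := by rw [eq_div_iff b0, mul_comm]; exact mb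
      have hne' : stN b - stN a ≠ 0 := fun h0 => hne (by rw [← neg_sub, h0, neg_zero])
      have := he0 t
      have e3 : (stS a - stS b) = (stN b - stN a) / (stN a * stN b) := by
        rw [sa, sb]; field_simp
      rw [e3]
      field_simp
      ring
    rw [this]; exact key
  refine no_log_circle (fun t => G (e t) - H (e' t) - Complex.log (R t)) ?_ ?_ ?_
  · exact (hGe.sub hHe).sub (hRc.clog hRs)
  · have h2 : e (2 * Real.pi) = e 0 := by
      simp only [e]; push_cast; rw [Complex.exp_two_pi_mul_I]; simp
    simp only [R, e', h2]
  · intro t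
    rw [Complex.exp_sub, Complex.exp_sub, Complex.exp_log (Complex.slitPlane_ne_zero (hRs t))]
    have e4 : Complex.exp (4 * t * Complex.I) = e t ^ 4 := by
      simp only [e]; rw [← Complex.exp_nat_mul]; congr 1; push_cast; ring
    rw [e4]
    simp only [R]
    have := he0 t
    have h1 := Complex.exp_ne_zero (G (e t))
    have h2 := Complex.exp_ne_zero (H (e' t))
    field_simp

/-! ### Construction of the pair field from a horizontal level -/

/-- one dimensional foliation of a compact space by finitely many charts -/
structure HFol (S : Type) [TopologicalSpace S] where
  ι : Type 1
  fin : Fintype ι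
  u : ι → Set S
  t : ι → S → ℝ
  y : ι → S → (Fin 2 → ℝ)
  p : ι → ℝ → (Fin 2 → ℝ) → S
  isOpen : ∀ i, IsOpen (u i)
  covers : ∀ z, ∃ i, z ∈ u i
  ct : ∀ i, ContinuousOn (t i) (u i)
  cy : ∀ i, ContinuousOn (y i) (u i)
  cp : ∀ i, Continuous fun q : ℝ × (Fin 2 → ℝ) => p i q.1 q.2
  mem : ∀ i z s, z ∈ u i → p i s (y i z) ∈ u i
  tp : ∀ i z s, z ∈ u i → t i (p i s (y i z)) = s
  yp : ∀ i z s, z ∈ u i → y i (p i s (y i z)) = y i z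
  pp : ∀ i z, z ∈ u i → p i (t i z) (y i z) = z
  compat : ∀ i j z w, z ∈ u i → w ∈ u i → z ∈ u j → w ∈ u j → y i z = y i w → y j z = y j w

attribute [instance] HFol.fin

/-- leafwise translation -/
def HFol.q {S : Type} [TopologicalSpace S] (K : HFol S) (i : K.ι) (z : S) (s : ℝ) : S :=
  K.p i (K.t i z + s) (K.y i z)

/-- with partition of unity and constants -/
structure HSetup (S : Type) [MetricSpace S] extends HFol S where
  chi : ι → S → ℝ
  chi_cont : ∀ i, Continuous (chi i)
  chi_nonneg : ∀ i z, 0 ≤ chi i z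
  chi_sum : ∀ z, ∑ i, chi i z = 1
  r : ℝ
  r_pos : 0 < r
  hr : ∀ i z w, z ∈ tsupport (chi i) → dist w z < r → w ∈ u i
  s0 : ℝ
  s0_pos : 0 < s0
  hs : ∀ i z s, z ∈ tsupport (chi i) → |s| ≤ s0 → dist (toHFol.q i z s) z < r

namespace HSetup

variable {S : Type} [MetricSpace S] (K : HSetup S)

abbrev q (i : K.ι) (z : S) (s : ℝ) : S := K.toHFol.q i z s

/-- the total leafwise displacement -/
def tau (z w : S) : ℝ := ∑ j, K.chi j z * |K.t j w - K.t j z|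

/-- number of charts -/
def m : ℝ := Fintype.card K.ι

/-- target displacement -/
def ε : ℝ := K.s0 / (2 * K.m)

/-- active charts -/
def Act (i : K.ι) (z : S) : Prop := 1 / (2 * K.m) < K.chi i z

theorem m_pos (z : S) : 0 < K.m := by
  obtain ⟨i, -⟩ := K.covers z
  have : Nonempty K.ι := ⟨i⟩
  simp [m, Fintype.card_pos]

theorem ε_pos (z : S) : 0 < K.ε := div_pos K.s0_pos (by linarith [K.m_pos z])

theorem mem_ts {i : K.ι} {z : S} (h : K.chi i z ≠ 0) : z ∈ tsupport (K.chi i) :=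
  subset_tsupport _ h

theorem ts_u {i : K.ι} {z : S} (h : z ∈ tsupport (K.chi i)) : z ∈ K.u i :=
  K.hr i z z h (by rw [dist_self]; exact K.r_pos)

theorem act_pos {i : K.ι} {z : S} (h : K.Act i z) : 0 < K.chi i z :=
  lt_of_le_of_lt (by have := K.m_pos z; positivity) h

theorem act_ts {i : K.ι} {z : S} (h : K.Act i z) : z ∈ tsupport (K.chi i) :=
  K.mem_ts (K.act_pos h).ne'

theorem act_u {i : K.ι} {z : S} (h : K.Act i z) : z ∈ K.u i := K.ts_u (K.act_ts h)

theorem exists_act (z : S) : ∃ i, K.Act i z := by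
  by_contra hcon
  simp only [Act, not_exists, not_lt] at hcon
  have h1 : ∑ i, K.chi i z ≤ ∑ _i : K.ι, 1 / (2 * K.m) := Finset.sum_le_sum fun i _ => hcon i
  rw [K.chi_sum, Finset.sum_const, Finset.card_univ, nsmul_eq_mul] at h1
  have h2 := K.m_pos z
  change 1 ≤ K.m * (1 / (2 * K.m)) at h1
  have : K.m * (1 / (2 * K.m)) = 1 / 2 := by field_simp
  linarith

theorem act_eventually {i : K.ι} {z : S} (h : K.Act i z) : ∀ᶠ z' in 𝓝 z, K.Act i z' :=
  (K.chi_cont i).continuousAt.eventually (lt_mem_nhds h)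

theorem q_zero {i : K.ι} {z : S} (h : z ∈ K.u i) : K.q i z 0 = z := by
  simp only [q, HFol.q, add_zero]; exact K.pp i z h

theorem q_y {i : K.ι} {z : S} (h : z ∈ K.u i) (s : ℝ) : K.y i (K.q i z s) = K.y i z :=
  K.yp i z _ h

theorem q_t {i : K.ι} {z : S} (h : z ∈ K.u i) (s : ℝ) : K.t i (K.q i z s) = K.t i z + s :=
  K.tp i z _ h

theorem q_mem {i : K.ι} {z : S} (h : z ∈ K.u i) (s : ℝ) : K.q i z s ∈ K.u i :=
  K.mem i z _ h

theorem q_cont (i : K.ι) (z : S) : Continuous (K.q i z) := by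
  have := (K.cp i).comp (Continuous.prodMk (continuous_const.add continuous_id)
    (continuous_const (y := K.y i z)) : Continuous fun s : ℝ => (K.t i z + s, K.y i z))
  exact this

theorem q_contAt {i : K.ι} {z : S} (h : z ∈ K.u i) (s : ℝ) :
    ContinuousAt (fun p : S × ℝ => K.q i p.1 p.2) (z, s) := by
  have hn := (K.isOpen i).mem_nhds h
  have c1 : ContinuousAt (fun p : S × ℝ => K.t i p.1) (z, s) :=
    ContinuousAt.comp (g := K.t i) (f := Prod.fst) ((K.ct i).continuousAt hn) continuousAt_fst
  have c2 : ContinuousAt (fun p : S × ℝ => K.y i p.1) (z, s) :=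
    ContinuousAt.comp (g := K.y i) (f := Prod.fst) ((K.cy i).continuousAt hn) continuousAt_fst
  exact ContinuousAt.comp (f := fun p : S × ℝ => (K.t i p.1 + p.2, K.y i p.1))
    (K.cp i).continuousAt ((c1.add continuousAt_snd).prodMk c2)

theorem eq_of {i : K.ι} {z w : S} (hz : z ∈ K.u i) (hw : w ∈ K.u i) (ht : K.t i z = K.t i w)
    (hy : K.y i z = K.y i w) : z = w := by
  rw [← K.pp i z hz, ← K.pp i w hw, ht, hy]

theorem q_y' {i j : K.ι} {z : S} (h : K.Act i z) (hj : K.chi j z ≠ 0) {s : ℝ} (hs : |s| ≤ K.s0) :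
    K.q i z s ∈ K.u j ∧ K.y j (K.q i z s) = K.y j z := by
  have h1 := K.hr j z _ (K.mem_ts hj) (K.hs i z s (K.act_ts h) hs)
  refine ⟨h1, ?_⟩
  exact K.compat i j _ _ (K.q_mem (K.act_u h) s) (K.act_u h) h1 (K.ts_u (K.mem_ts hj))
    (K.q_y (K.act_u h) s)

theorem tau_contAt {z0 w0 : S} (h : dist w0 z0 < K.r) :
    ContinuousAt (fun p : S × S => K.tau p.1 p.2) (z0, w0) := by
  unfold tau
  refine tendsto_finsetSum _ fun j _ => ?_
  by_cases hj : z0 ∈ tsupport (K.chi j)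
  · have hz := (K.isOpen j).mem_nhds (K.ts_u hj)
    have hw := (K.isOpen j).mem_nhds (K.hr j z0 w0 hj h)
    have c1 : ContinuousAt (fun p : S × S => K.t j p.1) (z0, w0) :=
      ContinuousAt.comp (g := K.t j) (f := Prod.fst) ((K.ct j).continuousAt hz) continuousAt_fst
    have c2 : ContinuousAt (fun p : S × S => K.t j p.2) (z0, w0) :=
      ContinuousAt.comp (g := K.t j) (f := Prod.snd) ((K.ct j).continuousAt hw) continuousAt_snd
    have c3 : ContinuousAt (fun p : S × S => K.chi j p.1) (z0, w0) :=
      ((K.chi_cont j).comp continuous_fst).continuousAt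
    exact c3.mul (c2.sub c1).abs
  · have h1 := notMem_tsupport_iff_eventuallyEq.1 hj
    have h2 : ∀ᶠ p : S × S in 𝓝 (z0, w0), K.chi j p.1 = 0 :=
      (continuousAt_fst (p := (z0, w0))).eventually h1
    have h3 : K.chi j z0 = 0 := h1.self_of_nhds
    have : (fun p : S × S => (0:ℝ)) =ᶠ[𝓝 (z0, w0)]
        fun p => K.chi j p.1 * |K.t j p.2 - K.t j p.1| := by
      filter_upwards [h2] with p hp
      rw [hp, zero_mul]
    exact (continuousAt_const (y := (0:ℝ))).congr this

theorem abs_sign {σ s : ℝ} (hσ : |σ| = 1) (hs : s ∈ Icc 0 K.s0) : |σ * s| ≤ K.s0 := by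
  rw [abs_mul, hσ, one_mul, abs_of_nonneg hs.1]; exact hs.2

theorem tau_strictMono {i : K.ι} {z : S} (h : K.Act i z) {σ : ℝ} (hσ : |σ| = 1) :
    StrictMonoOn (fun s => K.tau z (K.q i z (σ * s))) (Icc 0 K.s0) := by
  have hσ0 : σ ≠ 0 := fun h => by rw [h] at hσ; simp at hσ
  have key : ∀ j, K.chi j z ≠ 0 →
      StrictMonoOn (fun s => |K.t j (K.q i z (σ * s)) - K.t j z|) (Icc 0 K.s0) := by
    intro j hj
    have hc : ContinuousOn (fun s => K.t j (K.q i z (σ * s))) (Icc 0 K.s0) := by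
      refine (K.ct j).comp ?_ ?_
      · exact ((K.q_cont i z).comp (continuous_const.mul continuous_id)).continuousOn
      · intro s hs
        exact (K.q_y' h hj (K.abs_sign hσ hs)).1
    have hinj : InjOn (fun s => K.t j (K.q i z (σ * s))) (Icc 0 K.s0) := by
      intro s hs s' hs' he
      have a1 := K.q_y' h hj (K.abs_sign hσ hs)
      have a2 := K.q_y' h hj (K.abs_sign hσ hs')
      have a3 := congrArg (K.t i) (K.eq_of a1.1 a2.1 he (a1.2.trans a2.2.symm))
      rw [K.q_t (K.act_u h), K.q_t (K.act_u h)] at a3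
      exact mul_left_cancel₀ hσ0 (by linarith)
    have h0 : K.t j (K.q i z (σ * 0)) = K.t j z := by rw [mul_zero, K.q_zero (K.act_u h)]
    have z0 : (0:ℝ) ∈ Icc 0 K.s0 := ⟨le_rfl, K.s0_pos.le⟩
    rcases hc.strictMonoOn_of_injOn_Icc' K.s0_pos.le hinj with hm | hm
    · intro s hs s' hs' hlt
      have b1 := hm.monotoneOn z0 hs hs.1
      have b2 := hm hs hs' hlt
      simp only [h0] at b1 b2 ⊢
      rw [abs_of_nonneg (by linarith), abs_of_nonneg (by linarith)]
      linarith
    · intro s hs s' hs' hlt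
      have b1 := hm.antitoneOn z0 hs hs.1
      have b2 := hm hs hs' hlt
      simp only [h0] at b1 b2 ⊢
      rw [abs_of_nonpos (by linarith), abs_of_nonpos (by linarith)]
      linarith
  intro s hs s' hs' hlt
  refine Finset.sum_lt_sum (fun j _ => ?_) ⟨i, Finset.mem_univ i, ?_⟩
  · by_cases hj : K.chi j z = 0
    · rw [hj]; simp
    · exact mul_le_mul_of_nonneg_left (key j hj hs hs' hlt).le (K.chi_nonneg j z)
  · exact mul_lt_mul_of_pos_left (key i (K.act_pos h).ne' hs hs' hlt) (K.act_pos h)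

theorem tau_q_cont {i : K.ι} {z : S} (h : K.Act i z) {s : ℝ} (hs : |s| ≤ K.s0) :
    ContinuousAt (fun p : S × ℝ => K.tau p.1 (K.q i p.1 p.2)) (z, s) := by
  have h1 := K.tau_contAt (K.hs i z s (K.act_ts h) hs)
  exact ContinuousAt.comp (f := fun p : S × ℝ => (p.1, K.q i p.1 p.2)) h1
    (continuousAt_fst.prodMk (K.q_contAt (K.act_u h) s))

theorem tau_lower {i : K.ι} {z : S} (w : S) :
    K.chi i z * |K.t i w - K.t i z| ≤ K.tau z w :=
  Finset.single_le_sum (f := fun j => K.chi j z * |K.t j w - K.t j z|)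
    (fun j _ => mul_nonneg (K.chi_nonneg j z) (abs_nonneg _)) (Finset.mem_univ i)

theorem tau_self (z : S) : K.tau z z = 0 := by simp [tau]

theorem act_eps {i : K.ι} {z : S} (h : K.Act i z) : K.ε < K.chi i z * K.s0 := by
  have h1 := mul_lt_mul_of_pos_right h K.s0_pos
  have : K.ε = 1 / (2 * K.m) * K.s0 := by unfold ε; ring
  rw [this]; exact h1

theorem exists_sol {i : K.ι} {z : S} (h : K.Act i z) {σ : ℝ} (hσ : |σ| = 1) :
    ∃ s ∈ Ioo 0 K.s0, K.tau z (K.q i z (σ * s)) = K.ε := by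
  have hc : ContinuousOn (fun s => K.tau z (K.q i z (σ * s))) (Icc 0 K.s0) := by
    intro s hs
    apply ContinuousAt.continuousWithinAt
    have h1 := K.tau_q_cont h (K.abs_sign hσ hs)
    exact ContinuousAt.comp (f := fun s : ℝ => (z, σ * s)) h1 (by fun_prop)
  have f0 : K.tau z (K.q i z (σ * 0)) = 0 := by
    rw [mul_zero, K.q_zero (K.act_u h), K.tau_self]
  have f1 : K.ε < K.tau z (K.q i z (σ * K.s0)) := by
    refine lt_of_lt_of_le ?_ (K.tau_lower (i := i) _)
    rw [K.q_t (K.act_u h), add_sub_cancel_left, abs_mul, hσ, one_mul, abs_of_pos K.s0_pos]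
    exact K.act_eps h
  obtain ⟨s, hs, he⟩ := intermediate_value_Ioo K.s0_pos.le hc
    (show K.ε ∈ Ioo _ _ from ⟨by simp only [f0]; exact K.ε_pos z, f1⟩)
  exact ⟨s, hs, he⟩

/-- the solution set -/
def Sol (z : S) : Set S :=
  {w | dist w z < K.r ∧ (∀ j, K.chi j z ≠ 0 → K.y j w = K.y j z) ∧ K.tau z w = K.ε}

theorem mem_sol {i : K.ι} {z : S} (h : K.Act i z) {s : ℝ} (hs : |s| ≤ K.s0)
    (he : K.tau z (K.q i z s) = K.ε) : K.q i z s ∈ K.Sol z :=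
  ⟨K.hs i z s (K.act_ts h) hs, fun _ hj => (K.q_y' h hj hs).2, he⟩

theorem sol_eq {i : K.ι} {z w : S} (h : K.Act i z) (hw : w ∈ K.Sol z) :
    ∃ s, |s| ≤ K.s0 ∧ K.q i z s = w := by
  obtain ⟨h1, h2, h3⟩ := hw
  have hu := K.act_u h
  have hwu := K.hr i z w (K.act_ts h) h1
  refine ⟨K.t i w - K.t i z, ?_, ?_⟩
  · have h4 := K.tau_lower (i := i) (z := z) w
    rw [h3] at h4
    have h5 := K.act_eps h
    exact (lt_of_mul_lt_mul_left (h4.trans_lt h5) (K.act_pos h).le).le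
  · refine K.eq_of (K.q_mem hu _) hwu ?_ ?_
    · rw [K.q_t hu]; ring
    · rw [K.q_y hu, h2 i (K.act_pos h).ne']

theorem exists_pair : ∃ A B : S → S, (∀ z, A z ≠ B z) ∧ (∀ z, dist (A z) z < K.r) ∧
    (∀ z, dist (B z) z < K.r) ∧ ∀ z0, ∃ A' B' : S → S, ContinuousAt A' z0 ∧ ContinuousAt B' z0 ∧
    ∀ᶠ z in 𝓝 z0, (A z = A' z ∧ B z = B' z) ∨ (A z = B' z ∧ B z = A' z) := by
  have hsol : ∀ (σ : ℝ) (i : K.ι) (z : S), |σ| = 1 → K.Act i z →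
    ∃ s, s ∈ Ioo 0 K.s0 ∧ K.tau z (K.q i z (σ * s)) = K.ε := fun σ i z hσ h => by
      obtain ⟨s, h1, h2⟩ := K.exists_sol h hσ
      exact ⟨s, h1, h2⟩
  choose! f hf1 hf2 using hsol
  have hfc : ∀ (σ : ℝ) (i : K.ι) (z : S), |σ| = 1 → K.Act i z → ContinuousAt (f σ i) z := by
    intro σ i z hσ h
    have hm := K.tau_strictMono h hσ
    have hfz := hf1 σ i z hσ h
    have hfz' : f σ i z ∈ Icc 0 K.s0 := Ioo_subset_Icc_self hfz
    have hcz : ∀ s ∈ Icc 0 K.s0, ContinuousAt (fun z' => K.tau z' (K.q i z' (σ * s))) z := by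
      intro s hs
      exact ContinuousAt.comp (f := fun z' : S => (z', σ * s))
        (K.tau_q_cont h (K.abs_sign hσ hs)) (by fun_prop)
    refine tendsto_order.2 ⟨fun a ha => ?_, fun b hb => ?_⟩
    · have ha1 : max a 0 < f σ i z := max_lt ha hfz.1
      have ha2 : max a 0 ∈ Icc 0 K.s0 := ⟨le_max_right _ _, ha1.le.trans hfz.2.le⟩
      have h3 := hm ha2 hfz' ha1
      simp only [hf2 σ i z hσ h] at h3
      filter_upwards [(hcz _ ha2).eventually (gt_mem_nhds h3), K.act_eventually h] with z' hz' hact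
      have hm' := K.tau_strictMono hact hσ
      have h4 := hf2 σ i z' hσ hact
      have h5 := Ioo_subset_Icc_self (hf1 σ i z' hσ hact)
      rw [← h4] at hz'
      exact (le_max_left _ _).trans_lt ((hm'.lt_iff_lt ha2 h5).1 hz')
    · have hb1 : f σ i z < min b K.s0 := lt_min hb hfz.2
      have hb2 : min b K.s0 ∈ Icc 0 K.s0 := ⟨hfz.1.le.trans hb1.le, min_le_right _ _⟩
      have h3 := hm hfz' hb2 hb1
      simp only [hf2 σ i z hσ h] at h3
      filter_upwards [(hcz _ hb2).eventually (lt_mem_nhds h3), K.act_eventually h] with z' hz' hact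
      have hm' := K.tau_strictMono hact hσ
      have h4 := hf2 σ i z' hσ hact
      have h5 := Ioo_subset_Icc_self (hf1 σ i z' hσ hact)
      rw [← h4] at hz'
      exact ((hm'.lt_iff_lt h5 hb2).1 hz').trans_le (min_le_left _ _)
  let P : ℝ → K.ι → S → S := fun σ i z => K.q i z (σ * f σ i z)
  have hPc : ∀ (σ : ℝ) (i : K.ι) (z : S), |σ| = 1 → K.Act i z → ContinuousAt (P σ i) z := by
    intro σ i z hσ h
    exact ContinuousAt.comp (f := fun z' : S => (z', σ * f σ i z'))
      (K.q_contAt (K.act_u h) _) (continuousAt_id.prodMk (continuousAt_const.mul (hfc σ i z hσ h)))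
  have hPs : ∀ (σ : ℝ) (i : K.ι) (z : S), |σ| = 1 → K.Act i z → P σ i z ∈ K.Sol z :=
    fun σ i z hσ h => K.mem_sol h (K.abs_sign hσ (Ioo_subset_Icc_self (hf1 σ i z hσ h)))
      (hf2 σ i z hσ h)
  have h1 : |(1:ℝ)| = 1 := abs_one
  have hn1 : |(-1:ℝ)| = 1 := by simp
  have hPu : ∀ (i : K.ι) (z w : S), K.Act i z → w ∈ K.Sol z → w = P 1 i z ∨ w = P (-1) i z := by
    intro i z w h hw
    obtain ⟨s, hs, rfl⟩ := K.sol_eq h hw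
    have hτ := hw.2.2
    rcases le_total 0 s with h0 | h0
    · left
      have hs' : s ∈ Icc 0 K.s0 := ⟨h0, (le_abs_self s).trans hs⟩
      have := (K.tau_strictMono h h1).injOn hs' (Ioo_subset_Icc_self (hf1 1 i z h1 h))
        (by have h4 := hf2 1 i z h1 h
            simp only [one_mul] at h4 ⊢
            exact hτ.trans h4.symm)
      simp only [P, ← this, one_mul]
    · right
      have hs' : -s ∈ Icc 0 K.s0 := ⟨by linarith, (neg_le_abs s).trans hs⟩
      have := (K.tau_strictMono h hn1).injOn hs' (Ioo_subset_Icc_self (hf1 (-1) i z hn1 h))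
        (by have h4 := hf2 (-1) i z hn1 h
            simp only [neg_mul, one_mul, neg_neg] at h4 ⊢
            exact hτ.trans h4.symm)
      simp only [P, ← this, neg_mul, one_mul, neg_neg]
  have hPne : ∀ (i : K.ι) (z : S), K.Act i z → P 1 i z ≠ P (-1) i z := by
    intro i z h he
    have := congrArg (K.t i) he
    simp only [P] at this
    rw [K.q_t (K.act_u h), K.q_t (K.act_u h)] at this
    have a1 := (hf1 1 i z h1 h).1
    have a2 := (hf1 (-1) i z hn1 h).1
    linarith
  choose I hI using K.exists_act
  refine ⟨fun z => P 1 (I z) z, fun z => P (-1) (I z) z, fun z => hPne _ _ (hI z),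
    fun z => (hPs 1 _ z h1 (hI z)).1, fun z => (hPs (-1) _ z hn1 (hI z)).1, fun z0 => ?_⟩
  refine ⟨P 1 (I z0), P (-1) (I z0), hPc _ _ _ h1 (hI z0), hPc _ _ _ hn1 (hI z0), ?_⟩
  filter_upwards [K.act_eventually (hI z0)] with z hz
  have b1 := hPu (I z0) z _ hz (hPs 1 _ z h1 (hI z))
  have b2 := hPu (I z0) z _ hz (hPs (-1) _ z hn1 (hI z))
  have b3 := hPne _ _ (hI z)
  rcases b1 with b1 | b1 <;> rcases b2 with b2 | b2
  · exact absurd (b1.trans b2.symm) b3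
  · exact Or.inl ⟨b1, b2⟩
  · exact Or.inr ⟨b1, b2⟩
  · exact absurd (b1.trans b2.symm) b3

end HSetup

/-! ### Final assembly -/

theorem HFol.q_zero {S : Type} [TopologicalSpace S] (K : HFol S) {i : K.ι} {z : S} (h : z ∈ K.u i) :
    K.q i z 0 = z := by
  simp only [HFol.q, add_zero]; exact K.pp i z h

theorem HFol.q_continuousAt {S : Type} [TopologicalSpace S] (K : HFol S) {i : K.ι} {z : S}
    (h : z ∈ K.u i) (s : ℝ) : ContinuousAt (fun x : S × ℝ => K.q i x.1 x.2) (z, s) := by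
  have hn := (K.isOpen i).mem_nhds h
  have c1 : ContinuousAt (fun x : S × ℝ => K.t i x.1) (z, s) :=
    ContinuousAt.comp (g := K.t i) (f := Prod.fst) ((K.ct i).continuousAt hn) continuousAt_fst
  have c2 : ContinuousAt (fun x : S × ℝ => K.y i x.1) (z, s) :=
    ContinuousAt.comp (g := K.y i) (f := Prod.fst) ((K.cy i).continuousAt hn) continuousAt_fst
  have c3 : ContinuousAt (fun x : S × ℝ => (K.t i x.1 + x.2, K.y i x.1)) (z, s) :=
    (c1.add continuousAt_snd).prodMk c2
  exact ContinuousAt.comp (g := fun q : ℝ × (Fin 2 → ℝ) => K.p i q.1 q.2)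
    (f := fun x : S × ℝ => (K.t i x.1 + x.2, K.y i x.1)) (K.cp i).continuousAt c3

theorem HFol.exists_setup {S : Type} [MetricSpace S] [CompactSpace S] (K : HFol S) (c : ℝ)
    (hc : 0 < c) : ∃ G : HSetup S, G.r ≤ c := by
  obtain ⟨f, hf⟩ := PartitionOfUnity.exists_isSubordinate (X := S) isClosed_univ K.u K.isOpen
    (fun z _ => mem_iUnion.2 (K.covers z))
  have hcomp : ∀ i, IsCompact (tsupport (f i)) := fun i => (isClosed_tsupport _).isCompact
  have h1 : ∀ i, ∃ r : ℝ, 0 < r ∧ Metric.thickening r (tsupport (f i)) ⊆ K.u i := fun i =>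
    (hcomp i).exists_thickening_subset_open (K.isOpen i) (hf i)
  choose ri hri hri2 using h1
  have h2 : ∃ r : ℝ, 0 < r ∧ r ≤ c ∧ ∀ i, r ≤ ri i := by
    have e1 : ∀ᶠ r in 𝓝[>] (0:ℝ), ∀ i, r ≤ ri i := by
      rw [eventually_all]
      intro i
      exact nhdsWithin_le_nhds (Iic_mem_nhds (hri i))
    have e2 : ∀ᶠ r in 𝓝[>] (0:ℝ), r ≤ c := nhdsWithin_le_nhds (Iic_mem_nhds hc)
    obtain ⟨r, ⟨h, h'⟩, h''⟩ := ((e1.and e2).and self_mem_nhdsWithin).exists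
    exact ⟨r, h'', h', h⟩
  obtain ⟨r, hr, hrc, hrr⟩ := h2
  have h3 : ∃ s0 : ℝ, 0 < s0 ∧ ∀ i, ∀ z ∈ tsupport (f i), ∀ s, |s| ≤ s0 →
      dist (K.q i z s) z < r := by
    have e1 : ∀ᶠ s in 𝓝 (0:ℝ), ∀ i, ∀ z ∈ tsupport (f i), dist (K.q i z s) z < r := by
      rw [eventually_all]
      intro i
      refine (hcomp i).eventually_forall_of_forall_eventually ?_
      intro z hz
      have hc1 := K.q_continuousAt (hf i hz) 0
      have hc2 : ContinuousAt (fun x : S × ℝ => dist (K.q i x.1 x.2) x.1) (z, 0) :=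
        hc1.dist continuousAt_fst
      have hc3 : dist (K.q i z 0) z < r := by rw [K.q_zero (hf i hz), dist_self]; exact hr
      have hsw : Tendsto (fun x : ℝ × S => (x.2, x.1)) (𝓝 (0, z)) (𝓝 (z, 0)) :=
        (continuous_snd.prodMk continuous_fst).tendsto _
      exact hsw.eventually (hc2.eventually (Iio_mem_nhds hc3))
    obtain ⟨ε, hε, h⟩ := Metric.eventually_nhds_iff.1 e1
    refine ⟨ε / 2, by linarith, fun i z hz s hs => h ?_ i z hz⟩
    rw [Real.dist_eq, sub_zero]; linarith
  obtain ⟨s0, hs0, hs⟩ := h3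
  refine ⟨{ K with
    chi := fun i => f i
    chi_cont := fun i => (f i).continuous
    chi_nonneg := fun i z => f.nonneg i z
    chi_sum := fun z => by
      have := f.sum_eq_one (mem_univ z)
      rwa [finsum_eq_sum_of_fintype] at this
    r := r
    r_pos := hr
    hr := fun i z w hz hw => hri2 i (Metric.mem_thickening_iff.2 ⟨z, hz, hw.trans_le (hrr i)⟩)
    s0 := s0
    s0_pos := hs0
    hs := fun i z s hz h => hs i z hz s h }, hrc⟩

theorem Foliation.exists_hfol {S : Type} [MetricSpace S] [CompactSpace S] {Λ : Type 1}
    [TopologicalSpace Λ] (F : Foliation (S × Λ) 1 2) (α : Λ)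
    (h : ∀ x : S × Λ, x.2 = α → ∀ k, x ∈ F.U k → ∀ s, (F.psi k s (F.Y k x)).2 = α) :
    Nonempty (HFol S) := by
  have hα : Continuous fun z : S => (z, α) := by fun_prop
  have hopen : ∀ i, IsOpen {z : S | (z, α) ∈ F.U i} := fun i => (F.isOpen i).preimage hα
  obtain ⟨tset, ht⟩ := isCompact_univ.elim_finite_subcover (fun i => {z : S | (z, α) ∈ F.U i})
    hopen (fun z _ => mem_iUnion.2 (F.covers (z, α)))
  have key : ∀ i z s, (z, α) ∈ F.U i →
      ((F.psi i s (F.Y i (z, α))).1, α) = F.psi i s (F.Y i (z, α)) := fun i z s hz =>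
    Prod.ext rfl (h (z, α) rfl i hz s).symm
  exact ⟨{
    ι := tset
    fin := inferInstance
    u := fun i => {z : S | (z, α) ∈ F.U i}
    t := fun i z => F.T i (z, α)
    y := fun i z => F.Y i (z, α)
    p := fun i s y => (F.psi i s y).1
    isOpen := fun i => hopen i
    covers := fun z => by
      obtain ⟨i, hi, hz⟩ := mem_iUnion₂.1 (ht (mem_univ z))
      exact ⟨⟨i, hi⟩, hz⟩
    ct := fun i => (F.continuousOn_T i).comp hα.continuousOn (fun z hz => hz)
    cy := fun i => (F.continuousOn_Y i).comp hα.continuousOn (fun z hz => hz)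
    cp := fun i => continuous_fst.comp (F.continuous_psi i)
    mem := fun i z s hz => by
      change ((F.psi i s (F.Y i (z, α))).1, α) ∈ F.U i
      rw [key _ _ _ hz]; exact F.psi_mem _ _ _
    tp := fun i z s hz => by
      change F.T i ((F.psi i s (F.Y i (z, α))).1, α) = s
      rw [key _ _ _ hz]; exact F.T_psi _ _ _
    yp := fun i z s hz => by
      change F.Y i ((F.psi i s (F.Y i (z, α))).1, α) = F.Y i (z, α)
      rw [key _ _ _ hz]; exact F.Y_psi _ _ _
    pp := fun i z hz => by
      change (F.psi i (F.T i (z, α)) (F.Y i (z, α))).1 = z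
      rw [F.psi_T_Y hz]
    compat := fun i j z w hzi hwi hzj hwj he => F.Y_compat hzi hzj hwi hwj he }⟩

theorem no_hfol (K : HFol S2) : False := by
  obtain ⟨G, hG⟩ := K.exists_setup (1/100) (by norm_num)
  obtain ⟨A, B, h1, h2, h3, h4⟩ := G.exists_pair
  exact no_pairField (A := A) (B := B)
    { ne := h1, dA := fun z => (h2 z).trans_le hG, dB := fun z => (h3 z).trans_le hG, loc := h4 }

theorem s2_preconnected : PreconnectedSpace S2 := by
  refine Subtype.preconnectedSpace (isPreconnected_sphere ?_ _ _)
  rw [← Module.finrank_eq_rank]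
  simp

theorem lr_main {Λ : Type 1} [ConditionallyCompleteLinearOrder Λ]
    [TopologicalSpace Λ] [OrderTopology Λ] [DenselyOrdered Λ] [NoMaxOrder Λ] [NoMinOrder Λ]
    [Nonempty Λ] [OmegaLike Λ] (F : Foliation (S2 × Λ) 1 2) :
    ∃ α : Λ, ∀ z : S2, ∃ L, F.IsLeaf L ∧ {w : S2 × Λ | w.1 = z ∧ α < w.2} ⊆ L := by
  haveI := s2_preconnected
  by_cases hv : ∃ z a, F.Vert z a
  · obtain ⟨z, a, h⟩ := hv
    exact F.vert_conclusion z a h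
  · push Not at hv
    obtain ⟨α, h⟩ := F.horizontal hv
    obtain ⟨K⟩ := F.exists_hfol α h
    exact (no_hfol K).elim

/-- Every dimension-one foliation on `𝕊² × 𝕃₊` is ultimately vertical:
beyond some `α ∈ 𝕃₊` it is the trivial product foliation by long rays. -/
theorem statement12
    (F : Foliation ((Metric.sphere (0 : EuclideanSpace ℝ (Fin 3)) 1) × LongRay) 1 2) :
    ∃ α : LongRay, ∀ z : Metric.sphere (0 : EuclideanSpace ℝ (Fin 3)) 1,
      ∃ L, F.IsLeaf L ∧
        {w : (Metric.sphere (0 : EuclideanSpace ℝ (Fin 3)) 1) × LongRay |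
          w.1 = z ∧ α < w.2} ⊆ L := by
  exact @lr_main LongRay lrCCLO _ lr_orderTopology lr_dense lr_nomax lr_nomin lr_nonempty
    ⟨lr_countable_lt⟩ F
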